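/- arXiv:1805.03382 — 8 statements merged into one kernel-verified Lean document; each statement's English description precedes it below -/
import Mathlib

section
/- For every menu M on [0,1]^2 with at most 3 items (including the zero item ((0,0),0)), the revenue of M under the uniform distribution on [0,1]^2 is at most 59/108. -/
open MeasureTheory Real

noncomputable section

/-- Utility of a buyer with value `v = (v₁, v₂)` for a menu item
`it = ((x₁, x₂), p)`, namely `v₁ * x₁ + v₂ * x₂ - p`. -/
def util (v : ℝ × ℝ) (it : (ℝ × ℝ) × ℝ) : ℝ :=
  v.1 * it.1.1 + v.2 * it.1.2 - it.2

/-- `M` is a menu: every item has allocation in `[0,1]²` and nonnegative price,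
and the zero item `((0,0),0)` belongs to `M`. -/
def IsMenu (M : Finset ((ℝ × ℝ) × ℝ)) : Prop :=
  (((0 : ℝ), (0 : ℝ)), (0 : ℝ)) ∈ M ∧
    ∀ it ∈ M, it.1.1 ∈ Set.Icc (0 : ℝ) 1 ∧ it.1.2 ∈ Set.Icc (0 : ℝ) 1 ∧ 0 ≤ it.2

/-- The price paid by a buyer with value `v`: the highest price among the
utility-maximizing menu items of `M`. -/
def buyerPrice (M : Finset ((ℝ × ℝ) × ℝ)) (v : ℝ × ℝ) : ℝ :=
  sSup {p : ℝ | ∃ it ∈ M, it.2 = p ∧ ∀ it' ∈ M, util v it' ≤ util v it}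

/-- Revenue of the menu `M` under the uniform distribution on `[0,1]²`. -/
def rev (M : Finset ((ℝ × ℝ) × ℝ)) : ℝ :=
  ∫ v in Set.Icc ((0 : ℝ), (0 : ℝ)) ((1 : ℝ), (1 : ℝ)), buyerPrice M v

lemma int_cubic (a b c0 c1 c2 c3 : ℝ) :
    ∫ y in a..b, (c0 + c1 * y + c2 * y ^ 2 + c3 * y ^ 3)
      = c0 * (b - a) + c1 * (b ^ 2 - a ^ 2) / 2 + c2 * (b ^ 3 - a ^ 3) / 3
        + c3 * (b ^ 4 - a ^ 4) / 4 := by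
  have h : ∀ y ∈ Set.uIcc a b, HasDerivAt
      (fun y : ℝ => c0 * y + c1 * y ^ 2 / 2 + c2 * y ^ 3 / 3 + c3 * y ^ 4 / 4)
      (c0 + c1 * y + c2 * y ^ 2 + c3 * y ^ 3) y := by
    intro y _
    have h1 := (hasDerivAt_id y).const_mul c0
    have h2 := (((hasDerivAt_id y).pow 2).const_mul c1).div_const 2
    have h3 := (((hasDerivAt_id y).pow 3).const_mul c2).div_const 3
    have h4 := (((hasDerivAt_id y).pow 4).const_mul c3).div_const 4
    refine HasDerivAt.congr_deriv (((h1.add h2).add h3).add h4) ?_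
    simp only [id]
    norm_num
    ring
  rw [intervalIntegral.integral_eq_sub_of_hasDerivAt h
    (Continuous.intervalIntegrable (by fun_prop) _ _)]
  ring

lemma int_le_cubic {f : ℝ → ℝ} (hf : Continuous f) {a b : ℝ} (hab : a ≤ b) (c0 c1 c2 c3 : ℝ)
    (h : ∀ y, a ≤ y → y ≤ b → f y ≤ c0 + c1 * y + c2 * y ^ 2 + c3 * y ^ 3) :
    ∫ y in a..b, f y ≤ c0 * (b - a) + c1 * (b ^ 2 - a ^ 2) / 2 + c2 * (b ^ 3 - a ^ 3) / 3
        + c3 * (b ^ 4 - a ^ 4) / 4 := by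
  rw [← int_cubic]
  apply intervalIntegral.integral_mono_on hab (hf.intervalIntegrable _ _)
    (Continuous.intervalIntegrable (by fun_prop) _ _)
  intro y hy
  exact h y hy.1 hy.2

lemma int_ge_cubic {f : ℝ → ℝ} (hf : Continuous f) {a b : ℝ} (hab : a ≤ b) (c0 c1 c2 c3 : ℝ)
    (h : ∀ y, a ≤ y → y ≤ b → c0 + c1 * y + c2 * y ^ 2 + c3 * y ^ 3 ≤ f y) :
    c0 * (b - a) + c1 * (b ^ 2 - a ^ 2) / 2 + c2 * (b ^ 3 - a ^ 3) / 3
        + c3 * (b ^ 4 - a ^ 4) / 4 ≤ ∫ y in a..b, f y := by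
  rw [← int_cubic]
  apply intervalIntegral.integral_mono_on hab
    (Continuous.intervalIntegrable (by fun_prop) _ _) (hf.intervalIntegrable _ _)
  intro y hy
  exact h y hy.1 hy.2

lemma int_split {f : ℝ → ℝ} (hf : Continuous f) (a b c : ℝ) :
    ∫ y in a..c, f y = (∫ y in a..b, f y) + ∫ y in b..c, f y :=
  (intervalIntegral.integral_add_adjacent_intervals (hf.intervalIntegrable _ _)
    (hf.intervalIntegrable _ _)).symm

lemma slice_ge {f : ℝ → ℝ} (hf : Continuous f) (α β s : ℝ) (hs0 : 0 ≤ s) (hs1 : s ≤ 1)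
    (h0 : ∀ x, 0 ≤ x → x ≤ 1 → 0 ≤ f x) (h1 : ∀ x, 0 ≤ x → x ≤ 1 → α - β * (1 - x) ≤ f x) :
    s * α - β * s ^ 2 / 2 ≤ ∫ x in (0:ℝ)..1, f x := by
  rw [int_split hf 0 (1 - s) 1]
  have e1 := int_ge_cubic hf (a := 0) (b := 1 - s) (by linarith) 0 0 0 0
    (fun y h h' => by simpa using h0 y h (by linarith))
  have e2 := int_ge_cubic hf (a := 1 - s) (b := 1) (by linarith) (α - β) β 0 0
    (fun y h h' => by have := h1 y (by linarith) h'; linarith)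
  nlinarith

lemma cont_inner {u : ℝ → ℝ → ℝ} (hu : Continuous (Function.uncurry u)) :
    Continuous (fun y => ∫ x in (0:ℝ)..1, u x y) := by
  apply intervalIntegral.continuous_parametric_intervalIntegral_of_continuous' (f := fun y x => u x y)
  exact hu.comp continuous_swap

lemma int_sq {f : ℝ → ℝ → ℝ} (hf : Continuous (Function.uncurry f)) :
    ∫ v in Set.Icc ((0 : ℝ), (0 : ℝ)) ((1 : ℝ), (1 : ℝ)), f v.1 v.2
      = ∫ x in (0:ℝ)..1, ∫ y in (0:ℝ)..1, f x y := by
  have hI : IntegrableOn (fun v : ℝ × ℝ => f v.1 v.2) (Set.Icc (0:ℝ) 1 ×ˢ Set.Icc (0:ℝ) 1)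
      (volume.prod volume) := by
    apply ContinuousOn.integrableOn_compact
    · exact isCompact_Icc.prod isCompact_Icc
    · exact hf.continuousOn
  rw [← Set.Icc_prod_Icc, Measure.volume_eq_prod, setIntegral_prod _ hI]
  rw [intervalIntegral.integral_of_le zero_le_one, integral_Icc_eq_integral_Ioc]
  apply integral_congr_ae
  filter_upwards with x
  rw [intervalIntegral.integral_of_le zero_le_one, integral_Icc_eq_integral_Ioc]

lemma int_swap {f : ℝ → ℝ → ℝ} (hf : Continuous (Function.uncurry f)) :
    ∫ x in (0:ℝ)..1, ∫ y in (0:ℝ)..1, f x y = ∫ y in (0:ℝ)..1, ∫ x in (0:ℝ)..1, f x y := by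
  simp only [intervalIntegral.integral_of_le zero_le_one]
  apply integral_integral_swap
  have hI : IntegrableOn (Function.uncurry f) (Set.Icc (0:ℝ) 1 ×ˢ Set.Icc (0:ℝ) 1)
      (volume.prod volume) :=
    hf.continuousOn.integrableOn_compact (isCompact_Icc.prod isCompact_Icc)
  have := hI.mono_set (Set.prod_mono Set.Ioc_subset_Icc_self Set.Ioc_subset_Icc_self)
  rwa [IntegrableOn, ← Measure.prod_restrict] at this

/-- one-dimensional difference quotient estimate -/
lemma quot_1d {f : ℝ → ℝ} (hf : Continuous f) (h0 : ∀ x, 0 ≤ x → 0 ≤ f x)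
    (hm : ∀ x y, 0 ≤ x → x ≤ y → f x ≤ f y) (hl : ∀ x y, 0 ≤ x → x ≤ y → f y ≤ f x + (y - x))
    (h2 : f 1 ≤ 2) {h : ℝ} (hh : 0 < h) (hh1 : h ≤ 1) :
    ∫ x in (0:ℝ)..1, x * ((f (x + h) - f x) / h) ≤ f 1 + 4 * h - ∫ x in (0:ℝ)..1, f x := by
  have c1 : Continuous (fun x => x * f x) := by fun_prop
  have c2 : Continuous (fun x => f (x + h)) := by fun_prop
  have e1 : ∫ x in (0:ℝ)..1, (x + h) * f (x + h) = ∫ x in (0 + h)..(1 + h), x * f x :=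
    intervalIntegral.integral_comp_add_right (fun x => x * f x) h
  have e2 : ∫ x in (0:ℝ)..1, x * ((f (x + h) - f x) / h)
      = ((∫ x in (0:ℝ)..1, (x + h) * f (x + h)) - (∫ x in (0:ℝ)..1, x * f x)) / h
        - ∫ x in (0:ℝ)..1, f (x + h) := by
    rw [← intervalIntegral.integral_sub (Continuous.intervalIntegrable (by fun_prop) _ _)
      (c1.intervalIntegrable _ _), ← intervalIntegral.integral_div,
      ← intervalIntegral.integral_sub (Continuous.intervalIntegrable (by fun_prop) _ _)
      (c2.intervalIntegrable _ _)]
    apply intervalIntegral.integral_congr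
    intro x _
    field_simp
    ring
  have s1 := int_split c1 0 h (1 + h)
  have s2 := int_split c1 0 1 (1 + h)
  have g1 := int_ge_cubic c1 (a := 0) (b := h) hh.le 0 0 0 0 (fun y hy _ => by
    have := mul_nonneg hy (h0 y hy); linarith)
  have g2 := int_le_cubic c1 (a := 1) (b := 1 + h) (by linarith) ((1 + h) * (f 1 + h)) 0 0 0
    (fun y hy hy' => by
      have a1 := hl 1 y zero_le_one hy
      have a2 := h0 y (by linarith)
      have : y * f y ≤ (1 + h) * (f 1 + h) := by
        apply mul_le_mul hy' (by linarith) a2 (by linarith)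
      linarith)
  have g3 : ∫ x in (0:ℝ)..1, f x ≤ ∫ x in (0:ℝ)..1, f (x + h) := by
    apply intervalIntegral.integral_mono_on zero_le_one (hf.intervalIntegrable _ _)
      (c2.intervalIntegrable _ _)
    intro x hx
    exact hm x (x + h) hx.1 (by linarith)
  rw [e2, e1, zero_add]
  have : ((∫ x in h..(1 + h), x * f x) - ∫ x in (0:ℝ)..1, x * f x) / h ≤ (1 + h) * (f 1 + h) := by
    rw [div_le_iff₀ hh]
    nlinarith
  nlinarith

def UU (a b : (ℝ × ℝ) × ℝ) (x y : ℝ) : ℝ := max 0 (max (util (x, y) a) (util (x, y) b))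

lemma UU_cont (a b : (ℝ × ℝ) × ℝ) : Continuous (Function.uncurry (UU a b)) := by
  unfold UU util Function.uncurry
  fun_prop

def ValidItem (it : (ℝ × ℝ) × ℝ) : Prop :=
  it.1.1 ∈ Set.Icc (0 : ℝ) 1 ∧ it.1.2 ∈ Set.Icc (0 : ℝ) 1 ∧ 0 ≤ it.2

lemma UU_mono1 {a b : (ℝ × ℝ) × ℝ} (ha : ValidItem a) (hb : ValidItem b) {x x' y : ℝ}
    (h : x ≤ x') : UU a b x y ≤ UU a b x' y := by
  obtain ⟨⟨a1, a2⟩, ⟨a3, a4⟩, a5⟩ := ha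
  obtain ⟨⟨b1, b2⟩, ⟨b3, b4⟩, b5⟩ := hb
  unfold UU util
  apply max_le_max le_rfl
  apply max_le_max <;> dsimp only <;> nlinarith

lemma UU_mono2 {a b : (ℝ × ℝ) × ℝ} (ha : ValidItem a) (hb : ValidItem b) {x y y' : ℝ}
    (h : y ≤ y') : UU a b x y ≤ UU a b x y' := by
  obtain ⟨⟨a1, a2⟩, ⟨a3, a4⟩, a5⟩ := ha
  obtain ⟨⟨b1, b2⟩, ⟨b3, b4⟩, b5⟩ := hb
  unfold UU util
  apply max_le_max le_rfl
  apply max_le_max <;> dsimp only <;> nlinarith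

lemma UU_lip1 {a b : (ℝ × ℝ) × ℝ} (ha : ValidItem a) (hb : ValidItem b) {x x' y : ℝ}
    (h : x ≤ x') : UU a b x' y ≤ UU a b x y + (x' - x) := by
  obtain ⟨⟨a1, a2⟩, ⟨a3, a4⟩, a5⟩ := ha
  obtain ⟨⟨b1, b2⟩, ⟨b3, b4⟩, b5⟩ := hb
  have h1 : 0 ≤ UU a b x y := le_max_left _ _
  have h2 : util (x, y) a ≤ UU a b x y := le_trans (le_max_left _ _) (le_max_right _ _)
  have h3 : util (x, y) b ≤ UU a b x y := le_trans (le_max_right _ _) (le_max_right _ _)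
  refine max_le (by linarith) (max_le ?_ ?_) <;> unfold util at * <;> dsimp only at * <;> nlinarith

lemma UU_lip2 {a b : (ℝ × ℝ) × ℝ} (ha : ValidItem a) (hb : ValidItem b) {x y y' : ℝ}
    (h : y ≤ y') : UU a b x y' ≤ UU a b x y + (y' - y) := by
  obtain ⟨⟨a1, a2⟩, ⟨a3, a4⟩, a5⟩ := ha
  obtain ⟨⟨b1, b2⟩, ⟨b3, b4⟩, b5⟩ := hb
  have h1 : 0 ≤ UU a b x y := le_max_left _ _
  have h2 : util (x, y) a ≤ UU a b x y := le_trans (le_max_left _ _) (le_max_right _ _)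
  have h3 : util (x, y) b ≤ UU a b x y := le_trans (le_max_right _ _) (le_max_right _ _)
  refine max_le (by linarith) (max_le ?_ ?_) <;> unfold util at * <;> dsimp only at * <;> nlinarith

lemma UU_le_two {a b : (ℝ × ℝ) × ℝ} (ha : ValidItem a) (hb : ValidItem b) {x y : ℝ}
    (hx : x ≤ 1) (hy : y ≤ 1) : UU a b x y ≤ 2 := by
  refine le_trans (UU_mono1 ha hb hx) (le_trans (UU_mono2 ha hb hy) ?_)
  obtain ⟨⟨a1, a2⟩, ⟨a3, a4⟩, a5⟩ := ha
  obtain ⟨⟨b1, b2⟩, ⟨b3, b4⟩, b5⟩ := hb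
  refine max_le (by linarith) (max_le ?_ ?_) <;> unfold util <;> dsimp only <;> linarith

lemma price_le {M : Finset ((ℝ × ℝ) × ℝ)} {a b : (ℝ × ℝ) × ℝ} (ha : ValidItem a)
    (hb : ValidItem b)
    (hM : ∀ it, it ∈ M ↔ it = ((0, 0), 0) ∨ it = a ∨ it = b) {x y h : ℝ} (hx : 0 ≤ x) (hy : 0 ≤ y)
    (hh : 0 < h) :
    0 ≤ buyerPrice M (x, y) ∧ buyerPrice M (x, y) ≤
      x * ((UU a b (x + h) y - UU a b x y) / h) + y * ((UU a b x (y + h) - UU a b x y) / h)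
        - UU a b x y := by
  have hv : ∀ it ∈ M, ValidItem it := by
    intro it hit
    rcases (hM it).1 hit with h | h | h
    · subst h; refine ⟨⟨?_, ?_⟩, ⟨?_, ?_⟩, ?_⟩ <;> norm_num
    · exact h ▸ ha
    · exact h ▸ hb
  have hU : ∀ x' y', ∀ it ∈ M, util (x', y') it ≤ UU a b x' y' := by
    intro x' y' it hit
    rcases (hM it).1 hit with h | h | h
    · subst h; simp [util, UU]
    · subst h; exact le_trans (le_max_left _ _) (le_max_right _ _)
    · subst h; exact le_trans (le_max_right _ _) (le_max_right _ _)
  have hkey : ∀ p ∈ {p : ℝ | ∃ it ∈ M, it.2 = p ∧ ∀ it' ∈ M, util (x, y) it' ≤ util (x, y) it},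
      p ≤ x * ((UU a b (x + h) y - UU a b x y) / h) + y * ((UU a b x (y + h) - UU a b x y) / h)
        - UU a b x y := by
    rintro p ⟨it, hit, rfl, hmax⟩
    have e : UU a b x y = util (x, y) it := by
      apply le_antisymm
      · refine max_le ?_ (max_le ?_ ?_)
        · have := hmax ((0, 0), 0) ((hM _).2 (Or.inl rfl))
          simpa [util] using this
        · exact hmax a ((hM _).2 (Or.inr (Or.inl rfl)))
        · exact hmax b ((hM _).2 (Or.inr (Or.inr rfl)))
      · exact hU x y it hit
    have h1 := hU (x + h) y it hit
    have h2 := hU x (y + h) it hit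
    have q1 : it.1.1 ≤ (UU a b (x + h) y - UU a b x y) / h := by
      rw [le_div_iff₀ hh, e]; unfold util at *; dsimp only at *; linarith
    have q2 : it.1.2 ≤ (UU a b x (y + h) - UU a b x y) / h := by
      rw [le_div_iff₀ hh, e]; unfold util at *; dsimp only at *; linarith
    have q3 := mul_le_mul_of_nonneg_left q1 hx
    have q4 := mul_le_mul_of_nonneg_left q2 hy
    have : UU a b x y = x * it.1.1 + y * it.1.2 - it.2 := e
    linarith
  -- the set is nonempty
  obtain ⟨it, hit, hmax⟩ := Finset.exists_max_image M (util (x, y))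
    ⟨((0, 0), 0), (hM _).2 (Or.inl rfl)⟩
  have hn : {p : ℝ | ∃ it ∈ M, it.2 = p ∧ ∀ it' ∈ M, util (x, y) it' ≤ util (x, y) it}.Nonempty :=
    ⟨it.2, it, hit, rfl, hmax⟩
  constructor
  · apply Real.sSup_nonneg
    rintro p ⟨it, hit, rfl, -⟩
    exact (hv it hit).2.2
  · exact csSup_le hn hkey

lemma rev_le {M : Finset ((ℝ × ℝ) × ℝ)} {a b : (ℝ × ℝ) × ℝ} (ha : ValidItem a)
    (hb : ValidItem b)
    (hM : ∀ it, it ∈ M ↔ it = ((0, 0), 0) ∨ it = a ∨ it = b) :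
    rev M ≤ (∫ y in (0:ℝ)..1, UU a b 1 y) + (∫ x in (0:ℝ)..1, UU a b x 1)
      - 3 * ∫ y in (0:ℝ)..1, ∫ x in (0:ℝ)..1, UU a b x y := by
  have hU := UU_cont a b
  have hU2 : Continuous (fun v : ℝ × ℝ => UU a b v.1 v.2) := hU
  have cx : ∀ y, Continuous (fun x => UU a b x y) := fun y =>
    hU2.comp (continuous_id.prodMk continuous_const)
  have cy : ∀ x, Continuous (fun y => UU a b x y) := fun x =>
    hU2.comp (continuous_const.prodMk continuous_id)
  have key : ∀ h : ℝ, 0 < h → h ≤ 1 → rev M ≤ (∫ y in (0:ℝ)..1, UU a b 1 y)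
      + (∫ x in (0:ℝ)..1, UU a b x 1)
      - 3 * (∫ y in (0:ℝ)..1, ∫ x in (0:ℝ)..1, UU a b x y) + 8 * h := by
    intro h hh hh1
    let g1 : ℝ → ℝ → ℝ := fun x y => x * ((UU a b (x + h) y - UU a b x y) / h)
    let g2 : ℝ → ℝ → ℝ := fun x y => y * ((UU a b x (y + h) - UU a b x y) / h)
    have s1 : Continuous (fun v : ℝ × ℝ => UU a b (v.1 + h) v.2) :=
      hU2.comp ((continuous_fst.add continuous_const).prodMk continuous_snd)
    have s2 : Continuous (fun v : ℝ × ℝ => UU a b v.1 (v.2 + h)) :=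
      hU2.comp (continuous_fst.prodMk (continuous_snd.add continuous_const))
    have c1 : Continuous (Function.uncurry g1) := by
      change Continuous (fun v : ℝ × ℝ => v.1 * ((UU a b (v.1 + h) v.2 - UU a b v.1 v.2) / h))
      fun_prop
    have c2 : Continuous (Function.uncurry g2) := by
      change Continuous (fun v : ℝ × ℝ => v.2 * ((UU a b v.1 (v.2 + h) - UU a b v.1 v.2) / h))
      fun_prop
    have I : ∀ f : ℝ × ℝ → ℝ, Continuous f →
        IntegrableOn f (Set.Icc ((0 : ℝ), (0 : ℝ)) ((1 : ℝ), (1 : ℝ))) := fun f hf =>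
      hf.continuousOn.integrableOn_compact isCompact_Icc
    have c1' : Continuous (fun v : ℝ × ℝ => g1 v.1 v.2) := c1
    have c2' : Continuous (fun v : ℝ × ℝ => g2 v.1 v.2) := c2
    have step1 : rev M ≤ ∫ v in Set.Icc ((0 : ℝ), (0 : ℝ)) ((1 : ℝ), (1 : ℝ)),
        (g1 v.1 v.2 + g2 v.1 v.2 - UU a b v.1 v.2) := by
      unfold rev
      apply integral_mono_of_nonneg
      · filter_upwards [ae_restrict_mem measurableSet_Icc] with v hv
        exact (price_le ha hb hM hv.1.1 hv.1.2 hh).1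
      · exact I _ ((c1'.add c2').sub hU2)
      · filter_upwards [ae_restrict_mem measurableSet_Icc] with v hv
        exact (price_le ha hb hM hv.1.1 hv.1.2 hh).2
    have step2 : ∫ v in Set.Icc ((0 : ℝ), (0 : ℝ)) ((1 : ℝ), (1 : ℝ)),
        (g1 v.1 v.2 + g2 v.1 v.2 - UU a b v.1 v.2)
        = (∫ v in Set.Icc ((0 : ℝ), (0 : ℝ)) ((1 : ℝ), (1 : ℝ)), g1 v.1 v.2)
        + (∫ v in Set.Icc ((0 : ℝ), (0 : ℝ)) ((1 : ℝ), (1 : ℝ)), g2 v.1 v.2)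
        - ∫ v in Set.Icc ((0 : ℝ), (0 : ℝ)) ((1 : ℝ), (1 : ℝ)), UU a b v.1 v.2 := by
      have c12 : Continuous (fun v : ℝ × ℝ => g1 v.1 v.2 + g2 v.1 v.2) := c1'.add c2'
      rw [integral_sub (I _ c12) (I _ hU2), integral_add (I _ c1') (I _ c2')]
    rw [int_sq c1, int_sq c2, int_sq hU, int_swap c1] at step2
    have hsw : Continuous (Function.uncurry (fun y x => UU a b x y)) := hU.comp continuous_swap
    have iy : Continuous (fun y => ∫ x in (0:ℝ)..1, UU a b x y) := cont_inner hU
    have ix : Continuous (fun x => ∫ y in (0:ℝ)..1, UU a b x y) := cont_inner hsw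
    have jy : Continuous (fun y => ∫ x in (0:ℝ)..1, g1 x y) := cont_inner c1
    have jx : Continuous (fun x => ∫ y in (0:ℝ)..1, g2 x y) :=
      cont_inner (u := fun y x => g2 x y) (c2.comp continuous_swap)
    have b1 : ∫ y in (0:ℝ)..1, ∫ x in (0:ℝ)..1, g1 x y ≤
        ∫ y in (0:ℝ)..1, (UU a b 1 y + 4 * h - ∫ x in (0:ℝ)..1, UU a b x y) := by
      apply intervalIntegral.integral_mono_on zero_le_one (jy.intervalIntegrable _ _)
        (Continuous.intervalIntegrable (((cy 1).add continuous_const).sub iy) _ _)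
      intro y hy
      exact quot_1d (cx y) (fun x _ => le_max_left _ _) (fun x x' _ hx => UU_mono1 ha hb hx)
        (fun x x' _ hx => UU_lip1 ha hb hx) (UU_le_two ha hb le_rfl hy.2) hh hh1
    have b2 : ∫ x in (0:ℝ)..1, ∫ y in (0:ℝ)..1, g2 x y ≤
        ∫ x in (0:ℝ)..1, (UU a b x 1 + 4 * h - ∫ y in (0:ℝ)..1, UU a b x y) := by
      apply intervalIntegral.integral_mono_on zero_le_one (jx.intervalIntegrable _ _)
        (Continuous.intervalIntegrable (((cx 1).add continuous_const).sub ix) _ _)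
      intro x hx
      exact quot_1d (cy x) (fun x _ => le_max_left _ _) (fun x x' _ hx => UU_mono2 ha hb hx)
        (fun x x' _ hx => UU_lip2 ha hb hx) (UU_le_two ha hb hx.2 le_rfl) hh hh1
    have d1 : Continuous (fun y => UU a b 1 y + 4 * h) := (cy 1).add continuous_const
    have d2 : Continuous (fun x => UU a b x 1 + 4 * h) := (cx 1).add continuous_const
    rw [intervalIntegral.integral_sub (d1.intervalIntegrable _ _)
      (iy.intervalIntegrable _ _), intervalIntegral.integral_add ((cy 1).intervalIntegrable _ _)
      (continuous_const.intervalIntegrable _ _)] at b1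
    rw [intervalIntegral.integral_sub (d2.intervalIntegrable _ _)
      (ix.intervalIntegrable _ _), intervalIntegral.integral_add ((cx 1).intervalIntegrable _ _)
      (continuous_const.intervalIntegrable _ _)] at b2
    have b3 := int_swap hU
    simp only [intervalIntegral.integral_const, sub_zero, one_smul] at b1 b2
    linarith
  by_contra hcon
  push Not at hcon
  set Φ := (∫ y in (0:ℝ)..1, UU a b 1 y) + (∫ x in (0:ℝ)..1, UU a b x 1)
      - 3 * ∫ y in (0:ℝ)..1, ∫ x in (0:ℝ)..1, UU a b x y with hΦ
  have hk := key (min 1 ((rev M - Φ) / 16)) (lt_min one_pos (by linarith)) (min_le_left _ _)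
  have := min_le_right (1:ℝ) ((rev M - Φ) / 16)
  linarith

lemma pos_int_le {c H : ℝ} (hc : 0 < c) (hH : 0 ≤ H) (hHc : H ≤ c) :
    ∫ y in (0:ℝ)..1, max 0 (H - c * (1 - y)) ≤ H ^ 2 / (2 * c) := by
  have cf : Continuous (fun y : ℝ => max 0 (H - c * (1 - y))) := by fun_prop
  have ht1 : H / c ≤ 1 := (div_le_one hc).2 hHc
  have ht0 : 0 ≤ H / c := div_nonneg hH hc.le
  have htc : H / c * c = H := div_mul_cancel₀ _ hc.ne'
  set t := H / c with ht
  rw [int_split cf 0 (1 - t) 1]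
  have e1 := int_le_cubic cf (a := 0) (b := 1 - t) (by linarith) 0 0 0 0 (fun y h h' => by
    have : H - c * (1 - y) ≤ 0 := by nlinarith
    rw [max_eq_left this]; simp)
  have e2 := int_le_cubic cf (a := 1 - t) (b := 1) (by linarith) (H - c) c 0 0 (fun y h h' => by
    have : 0 ≤ H - c * (1 - y) := by nlinarith
    rw [max_eq_right this]; nlinarith)
  have : H ^ 2 / (2 * c) = t * H / 2 := by rw [ht]; field_simp
  rw [this]
  have id : (H - c) * (1 - (1 - t)) + c * (1 ^ 2 - (1 - t) ^ 2) / 2 = t * H / 2 := by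
    rw [← htc]; ring
  linarith

lemma lin_int_le {c H : ℝ} (hc : 0 ≤ c) (hHc : c ≤ H) :
    ∫ y in (0:ℝ)..1, max 0 (H - c * (1 - y)) ≤ H - c / 2 := by
  have cf : Continuous (fun y : ℝ => max 0 (H - c * (1 - y))) := by fun_prop
  have e2 := int_le_cubic cf (a := 0) (b := 1) (by linarith) (H - c) c 0 0 (fun y h h' => by
    have : 0 ≤ H - c * (1 - y) := by nlinarith
    rw [max_eq_right this]; nlinarith)
  linarith

def SI (c1 c2 H : ℝ) : ℝ :=
  (∫ y in (0:ℝ)..1, max 0 (H - c2 * (1 - y))) + (∫ x in (0:ℝ)..1, max 0 (H - c1 * (1 - x)))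
    - 3 * ∫ y in (0:ℝ)..1, ∫ x in (0:ℝ)..1, max 0 (H - c1 * (1 - x) - c2 * (1 - y))

lemma SI_swap (c1 c2 H : ℝ) : SI c1 c2 H = SI c2 c1 H := by
  have h : Continuous (Function.uncurry
    (fun y x : ℝ => max 0 (H - c1 * (1 - x) - c2 * (1 - y)))) := by
    unfold Function.uncurry; fun_prop
  have e := int_swap h
  unfold SI
  rw [e]
  have : ∀ x y : ℝ, H - c1 * (1 - x) - c2 * (1 - y) = H - c2 * (1 - y) - c1 * (1 - x) := by
    intros; ring
  simp only [this]
  ring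

lemma exists_c : ∃ c : ℝ, 0 < c ∧ c ^ 2 = 2 / 3 ∧ c < 59 / 72 ∧ 4 / 5 < c := by
  have h2 : √(2 / 3 : ℝ) ^ 2 = 2 / 3 := Real.sq_sqrt (by norm_num)
  have h0 : 0 < √(2 / 3 : ℝ) := Real.sqrt_pos.2 (by norm_num)
  exact ⟨_, h0, h2, by nlinarith, by nlinarith⟩

lemma SI_big {c1 c2 H : ℝ} (h1 : 0 ≤ c1) (h2 : 0 ≤ c2) (H1 : c1 ≤ H) (H2 : c2 ≤ H) :
    SI c1 c2 H ≤ 59 / 216 * (c1 + c2) := by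
  obtain ⟨c, hc0, hc2, hc3, hc4⟩ := exists_c
  have hu : Continuous (Function.uncurry
    (fun x y : ℝ => max 0 (H - c1 * (1 - x) - c2 * (1 - y)))) := by
    unfold Function.uncurry; fun_prop
  have cg := cont_inner hu
  have ha := lin_int_le h2 H2
  have hb := lin_int_le h1 H1
  unfold SI
  have sl : ∀ y s : ℝ, 0 ≤ s → s ≤ 1 → s * (H - c2 * (1 - y)) - c1 * s ^ 2 / 2 ≤
      ∫ x in (0:ℝ)..1, max 0 (H - c1 * (1 - x) - c2 * (1 - y)) := by
    intro y s hs0 hs1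
    apply slice_ge (by fun_prop) _ _ _ hs0 hs1
    · intro x _ _; exact le_max_left _ _
    · intro x _ _; exact le_trans (by linarith) (le_max_right _ _)
  rw [int_split cg 0 c 1]
  have e1 := int_ge_cubic cg (a := 0) (b := c) hc0.le
    ((1 - c) * (H - c2) - c1 * (1 - c) ^ 2 / 2) ((H - c2) + (1 - c) * c2 - c1 * (1 - c))
    (c2 - c1 / 2) 0 (fun y h h' => by
      have := sl y (1 - c + y) (by linarith) (by linarith)
      refine le_trans (le_of_eq ?_) this
      ring)
  have e2 := int_ge_cubic cg (a := c) (b := 1) (by linarith) (H - c2 - c1 / 2) c2 0 0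
    (fun y h h' => by
      have := sl y 1 (by linarith) (by linarith)
      refine le_trans (le_of_eq ?_) this
      ring)
  have q3 : c ^ 3 = 2 / 3 * c := by rw [pow_succ, hc2]
  simp only [q3, hc2] at e1 e2
  have q1 : c * c = 2 / 3 := by rw [← hc2]; ring
  have f1 : c * c2 ≤ 59 / 72 * c2 := by nlinarith
  have f2 : c * c1 ≤ 59 / 72 * c1 := by nlinarith
  have e3 := add_le_add e1 e2
  generalize (∫ y in (0:ℝ)..c, ∫ x in (0:ℝ)..1, max 0 (H - c1 * (1 - x) - c2 * (1 - y))) = I1 at *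
  generalize (∫ y in c..1, ∫ x in (0:ℝ)..1, max 0 (H - c1 * (1 - x) - c2 * (1 - y))) = I2 at *
  generalize (∫ y in (0:ℝ)..1, max 0 (H - c2 * (1 - y))) = I3 at *
  generalize (∫ y in (0:ℝ)..1, max 0 (H - c1 * (1 - y))) = I4 at *
  ring_nf at e3
  simp only [q3, hc2] at e3
  ring_nf at e3
  nlinarith

lemma SI_small {c1 c2 H : ℝ} (h1 : 0 ≤ c1) (h12 : c1 ≤ c2) (H0 : 0 < H) (H2 : H < c2) :
    SI c1 c2 H ≤ 59 / 216 * (c1 + c2) := by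
  have hc2 : 0 < c2 := by linarith
  have hu : Continuous (Function.uncurry
    (fun y x : ℝ => max 0 (H - c1 * (1 - x) - c2 * (1 - y)))) := by
    unfold Function.uncurry; fun_prop
  have cg := cont_inner hu
  have ha := pos_int_le hc2 H0.le H2.le
  unfold SI
  rw [int_swap hu]
  have sl : ∀ x, x ≤ 1 → 0 ≤ H - c1 * (1 - x) → (H - c1 * (1 - x)) ^ 2 / (2 * c2) ≤
      ∫ y in (0:ℝ)..1, max 0 (H - c1 * (1 - x) - c2 * (1 - y)) := by
    intro x hx hw
    have := slice_ge (f := fun y => max 0 (H - c1 * (1 - x) - c2 * (1 - y))) (by fun_prop)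
      (H - c1 * (1 - x)) c2 ((H - c1 * (1 - x)) / c2)
      (by positivity) (by rw [div_le_one hc2]; nlinarith)
      (fun x _ _ => le_max_left _ _) (fun x _ _ => le_max_right _ _)
    refine le_trans (le_of_eq ?_) this
    field_simp
    ring
  rcases le_total c1 H with h | h
  · have hb := lin_int_le h1 h
    have e := int_ge_cubic cg (a := 0) (b := 1) zero_le_one ((H - c1) ^ 2 / (2 * c2))
      ((H - c1) * c1 / c2) (c1 ^ 2 / (2 * c2)) 0 (fun x h0 h' => by
        have := sl x h' (by nlinarith)
        refine le_trans (le_of_eq ?_) this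
        field_simp
        ring)
    have key : H ^ 2 / (2 * c2) + (H - c1 / 2) - 3 * ((H - c1) ^ 2 / (2 * c2) +
      ((H - c1) * c1 / c2) / 2 + (c1 ^ 2 / (2 * c2)) / 3) = (c1 + c2 - H) * (2 * H - c1) / (2 * c2) := by
      field_simp
      ring
    have key2 : (c1 + c2 - H) * (2 * H - c1) / (2 * c2) ≤ 59 / 216 * (c1 + c2) := by
      rw [div_le_iff₀ (by positivity)]
      rcases le_total (3 * c1) (2 * c2) with g | g
      · nlinarith [sq_nonneg (H - (3 * c1 + 2 * c2) / 4), mul_nonneg h1 (sub_nonneg.2 g), mul_nonneg hc2.le (sub_nonneg.2 g)]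
      · nlinarith [mul_nonneg (sub_nonneg.2 H2.le) (sub_nonneg.2 h), sq_nonneg (c1 - 8 / 11 * c2), mul_nonneg (sub_nonneg.2 H2.le) (sub_nonneg.2 g), mul_nonneg (sub_nonneg.2 H2.le) (sub_nonneg.2 H2.le)]
    norm_num at e
    linarith
  · have hc1 : 0 < c1 := by linarith
    have hb := pos_int_le hc1 H0.le h
    have ht1 : H / c1 ≤ 1 := (div_le_one hc1).2 h
    have ht0 : 0 ≤ H / c1 := div_nonneg H0.le hc1.le
    have htc : H / c1 * c1 = H := div_mul_cancel₀ _ hc1.ne'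
    have htd : H / c1 = H / c1 := rfl
    rw [int_split cg 0 (1 - H / c1) 1]
    have e1 := int_ge_cubic cg (a := 0) (b := 1 - H / c1) (by linarith) 0 0 0 0 (fun x h0 h' => by
        have : 0 ≤ ∫ y in (0:ℝ)..1, max 0 (H - c1 * (1 - x) - c2 * (1 - y)) :=
          intervalIntegral.integral_nonneg zero_le_one (fun y _ => le_max_left _ _)
        linarith)
    have e := int_ge_cubic cg (a := 1 - H / c1) (b := 1) (by linarith) ((H - c1) ^ 2 / (2 * c2))
      ((H - c1) * c1 / c2) (c1 ^ 2 / (2 * c2)) 0 (fun x h0 h' => by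
        have := sl x h' (by nlinarith)
        refine le_trans (le_of_eq ?_) this
        field_simp
        ring)
    have key : H ^ 2 / (2 * c2) + H ^ 2 / (2 * c1) - 3 * ((H - c1) ^ 2 / (2 * c2) * (1 - (1 - H / c1)) +
      ((H - c1) * c1 / c2) * (1 ^ 2 - (1 - H / c1) ^ 2) / 2
        + (c1 ^ 2 / (2 * c2)) * (1 ^ 3 - (1 - H / c1) ^ 3) / 3)
        = H ^ 2 * (c1 + c2 - H) / (2 * c1 * c2) := by
      field_simp
      ring
    have key2 : H ^ 2 * (c1 + c2 - H) / (2 * c1 * c2) ≤ 59 / 216 * (c1 + c2) := by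
      rw [div_le_iff₀ (by positivity)]
      have m1 : H ^ 2 * (c1 + c2 - H) ≤ c1 ^ 2 * c2 := by
        nlinarith [mul_nonneg (sub_nonneg.2 h) (sub_nonneg.2 h12), mul_nonneg (mul_nonneg (sub_nonneg.2 h) (sub_nonneg.2 h12)) H0.le, mul_nonneg (mul_nonneg (sub_nonneg.2 h) (sub_nonneg.2 h12)) hc1.le, mul_nonneg (mul_nonneg (sub_nonneg.2 h) (sub_nonneg.2 h)) H0.le, mul_nonneg (mul_nonneg (sub_nonneg.2 h)  H0.le) H0.le,mul_nonneg (mul_nonneg (sub_nonneg.2 h)  H0.le) hc1.le]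
      have m2 : c1 ^ 2 * c2 ≤ 59 / 216 * (c1 + c2) * (2 * c1 * c2) := by
        have : 0 ≤ c1 * c2 := by positivity
        nlinarith [mul_nonneg this (sub_nonneg.2 h12), mul_nonneg this hc1.le]
      linarith
    linarith

lemma SI_le {c1 c2 : ℝ} (h1 : 0 ≤ c1) (h2 : 0 ≤ c2) (H : ℝ) :
    SI c1 c2 H ≤ 59 / 216 * (c1 + c2) := by
  rcases le_or_gt H 0 with H0 | H0
  · have hp : ∀ c : ℝ, 0 ≤ c → ∫ y in (0:ℝ)..1, max 0 (H - c * (1 - y)) ≤ 0 := by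
      intro c hc
      have := int_le_cubic (f := fun y => max 0 (H - c * (1 - y))) (by fun_prop) (a := 0) (b := 1) zero_le_one 0 0 0 0 (fun y h h' => by
        have : H - c * (1 - y) ≤ 0 := by nlinarith
        rw [max_eq_left this]; simp)
      linarith
    have e1 := hp c1 h1
    have e2 := hp c2 h2
    have e3 : 0 ≤ ∫ y in (0:ℝ)..1, ∫ x in (0:ℝ)..1, max 0 (H - c1 * (1 - x) - c2 * (1 - y)) :=
      intervalIntegral.integral_nonneg zero_le_one (fun y _ =>
        intervalIntegral.integral_nonneg zero_le_one (fun x _ => le_max_left _ _))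
    unfold SI
    linarith
  · rcases le_total c1 c2 with h | h
    · rcases le_or_gt c2 H with g | g
      · exact SI_big h1 h2 (h.trans g) g
      · exact SI_small h1 h H0 g
    · rcases le_or_gt c1 H with g | g
      · exact SI_big h1 h2 g (h.trans g)
      · rw [SI_swap, add_comm]
        exact SI_small h2 h H0 g

structure C3 (a1 a2 b1 b2 k W : ℝ) (r g : ℝ → ℝ) (T : ℝ) : Prop where
  a10 : 0 ≤ a1
  a11 : a1 ≤ 1
  a20 : 0 ≤ a2
  a21 : a2 ≤ 1
  b10 : 0 ≤ b1
  b11 : b1 ≤ 1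
  b20 : 0 ≤ b2
  b21 : b2 ≤ 1
  k0 : 0 ≤ k
  k1 : k ≤ 1
  W0 : 0 ≤ W
  cr : Continuous r
  cg : Continuous g
  r1 : ∀ y, 0 ≤ y → y ≤ k → r y = max 0 (W - a2 * (k - y))
  r2 : ∀ y, k ≤ y → y ≤ 1 → r y = W + b2 * (y - k)
  ga : ∀ y s, 0 ≤ y → y ≤ 1 → 0 ≤ s → s ≤ 1 → s * (W - a2 * (k - y)) - a1 * s ^ 2 / 2 ≤ g y
  gb : ∀ y s, 0 ≤ y → y ≤ 1 → 0 ≤ s → s ≤ 1 → s * (W + b2 * (y - k)) - b1 * s ^ 2 / 2 ≤ g y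
  T1 : b1 ≤ W + b2 * (1 - k) → T ≤ W + b2 * (1 - k) - b1 / 2
  T2 : 0 < b1 → W + b2 * (1 - k) ≤ b1 → T ≤ (W + b2 * (1 - k)) ^ 2 / (2 * b1)

namespace C3
variable {a1 a2 b1 b2 k W : ℝ} {r g : ℝ → ℝ} {T : ℝ}

lemma g0 (h : C3 a1 a2 b1 b2 k W r g T) (y : ℝ) (h0 : 0 ≤ y) (h1 : y ≤ 1) : 0 ≤ g y := by
  have := h.ga y 0 h0 h1 le_rfl zero_le_one
  simpa using this

lemma cf (h : C3 a1 a2 b1 b2 k W r g T) : Continuous (fun y => r y - 3 * g y) :=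
  h.cr.sub (continuous_const.mul h.cg)

lemma int_f (h : C3 a1 a2 b1 b2 k W r g T) (p q : ℝ) :
    ∫ y in p..q, (r y - 3 * g y) = (∫ y in p..q, r y) - 3 * ∫ y in p..q, g y := by
  have c3 : Continuous (fun y => 3 * g y) := continuous_const.mul h.cg
  rw [intervalIntegral.integral_sub (h.cr.intervalIntegrable _ _)
    (c3.intervalIntegrable _ _), intervalIntegral.integral_const_mul]

/-- truncated case -/
lemma trunc (h : C3 a1 a2 b1 b2 k W r g T) (ht : W < a2 * k) :
    ∫ y in (0:ℝ)..k, (r y - 3 * g y) ≤ k * (W - W ^ 2) / 2 := by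
  obtain ⟨a10, a11, a20, a21, b10, b11, b20, b21, k0, k1, W0, cr, cg, r1, r2, ga, gb, -, -⟩ := id h
  have ha2 : 0 < a2 := by
    rcases a20.lt_or_eq with h | h
    · exact h
    · rw [← h] at ht; linarith
  have hW1 : W ≤ 1 := by nlinarith
  have htc : W / a2 * a2 = W := div_mul_cancel₀ _ ha2.ne'
  have ht0 : 0 ≤ W / a2 := div_nonneg W0 ha2.le
  have htk : W / a2 ≤ k := by rw [div_le_iff₀ ha2]; linarith
  generalize W / a2 = t at *
  rw [int_split h.cf 0 (k - t) k]
  have e1 := int_le_cubic h.cf (a := 0) (b := k - t) (by linarith) 0 0 0 0 (fun y h0 h1 => by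
    rw [r1 y h0 (by linarith), max_eq_left (by nlinarith)]
    have := h.g0 y h0 (by linarith)
    linarith)
  have e2 := int_le_cubic h.cf (a := k - t) (b := k) (by linarith)
    ((W - a2 * k) - 3 / 2 * (W - a2 * k) ^ 2) (a2 - 3 * a2 * (W - a2 * k)) (-3 / 2 * a2 ^ 2) 0
    (fun y h0 h1 => by
    have hw0 : 0 ≤ W - a2 * (k - y) := by nlinarith
    have hw1 : W - a2 * (k - y) ≤ W := by nlinarith
    rw [r1 y (by linarith) (by linarith), max_eq_right hw0]
    have := ga y (W - a2 * (k - y)) (by linarith) (by linarith) hw0 (by linarith)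
    nlinarith [sq_nonneg (W - a2 * (k - y))])
  have e3 : t * (W - W ^ 2) / 2 ≤ k * (W - W ^ 2) / 2 := by
    have : 0 ≤ W - W ^ 2 := by nlinarith
    nlinarith
  have id : ((W - a2 * k) - 3 / 2 * (W - a2 * k) ^ 2) * (k - (k - t))
     + (a2 - 3 * a2 * (W - a2 * k)) * (k ^ 2 - (k - t) ^ 2) / 2
     + (-3 / 2 * a2 ^ 2) * (k ^ 3 - (k - t) ^ 3) / 3 = t * (W - W ^ 2) / 2 := by
    rw [← htc]; ring
  linarith

lemma T_ineq {k W H b : ℝ} (k0 : 0 ≤ k) (k1 : k ≤ 1) (W0 : 0 ≤ W) (WH : W ≤ H) (Hb : H ≤ b)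
    (b1 : b ≤ 1) (hb : 0 < b) (Hm : H ≤ W + (1 - k)) :
    k / 6 - k * (3 * W - 1) ^ 2 / 24 + (1 - k) * (W + H) / 2
      + (H ^ 2 - (1 - k) * (W ^ 2 + W * H + H ^ 2)) / (2 * b) ≤ 59 / 108 := by
  have H0 : 0 ≤ H := W0.trans WH
  have fin : 1 / 2 + k * (1 - k) ^ 2 / 8 ≤ 59 / 108 := by
    nlinarith [mul_nonneg k0 (sub_nonneg.2 k1), sq_nonneg (3 * k - 1),
      mul_nonneg k0 (sq_nonneg (3 * k - 1)), mul_nonneg (sub_nonneg.2 k1) (sq_nonneg (3 * k - 1))]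
  rcases H0.eq_or_lt with hH | hH
  · have hW : W = 0 := by linarith
    rw [← hH, hW]
    norm_num
    linarith
  have fin2 : k ≤ W → k / 6 - k * (3 * W - 1) ^ 2 / 24 + 1 / 2 - (1 - k) * W ^ 2 / 2 ≤ 59 / 108 := by
    intro hkW
    refine le_trans ?_ fin
    have hW1 : W ≤ 1 := by linarith
    nlinarith [mul_nonneg (sub_nonneg.2 hkW) k0, mul_nonneg (sub_nonneg.2 hkW) (sub_nonneg.2 k1),
      mul_nonneg (mul_nonneg (sub_nonneg.2 hkW) k0) (sub_nonneg.2 k1),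
      mul_nonneg (mul_nonneg (sub_nonneg.2 hkW) W0) (sub_nonneg.2 k1), mul_nonneg (sub_nonneg.2 hkW) W0,
      mul_nonneg (mul_nonneg (sub_nonneg.2 hkW) k0) (sub_nonneg.2 hW1)]
  rcases le_total 0 (H ^ 2 - (1 - k) * (W ^ 2 + W * H + H ^ 2)) with hB | hB
  · have s1 : (H ^ 2 - (1 - k) * (W ^ 2 + W * H + H ^ 2)) / (2 * b) ≤
        (H ^ 2 - (1 - k) * (W ^ 2 + W * H + H ^ 2)) / (2 * H) :=
      div_le_div_of_nonneg_left hB (by linarith) (by linarith)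
    have s2 : (H ^ 2 - (1 - k) * (W ^ 2 + W * H + H ^ 2)) / (2 * H) = H / 2
       - (1 - k) * (W + H) / 2 - (1 - k) * W ^ 2 / (2 * H) := by
      field_simp
      ring
    have s3 : (1 - k) * W ^ 2 / 2 ≤ (1 - k) * W ^ 2 / (2 * H) := by
      apply div_le_div_of_nonneg_left (mul_nonneg (by linarith) (sq_nonneg _)) (by linarith)
        (by linarith)
    rcases le_total k W with hkW | hkW
    · have := fin2 hkW
      linarith
    · have : k / 6 - k * (3 * W - 1) ^ 2 / 24 + (W + (1 - k)) / 2 - (1 - k) * W ^ 2 / 2 ≤ 59 / 108 := by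
        refine le_trans ?_ fin
        nlinarith [mul_nonneg (sub_nonneg.2 hkW) (mul_nonneg (sub_nonneg.2 k1) (sub_nonneg.2 k1)),
          mul_nonneg (sub_nonneg.2 hkW) (sub_nonneg.2 k1), mul_nonneg (sub_nonneg.2 hkW) (sub_nonneg.2 hkW),
          mul_nonneg k0 (mul_nonneg (sub_nonneg.2 hkW) (sub_nonneg.2 hkW)),
          mul_nonneg (sub_nonneg.2 k1) (mul_nonneg (sub_nonneg.2 hkW) (sub_nonneg.2 hkW))]
      linarith
  · have s1 : (H ^ 2 - (1 - k) * (W ^ 2 + W * H + H ^ 2)) / (2 * b) ≤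
        (H ^ 2 - (1 - k) * (W ^ 2 + W * H + H ^ 2)) / 2 := by
      rw [div_le_div_iff₀ (by linarith) (by norm_num)]
      nlinarith
    have H1 : H ≤ 1 := Hb.trans b1
    have mono : ∀ H' : ℝ, H ≤ H' → H' ≤ 1 → (1 - k) * (W + H) / 2 + (H ^ 2 - (1 - k) * (W ^ 2 + W * H + H ^ 2)) / 2
        ≤ (1 - k) * (W + H') / 2 + (H' ^ 2 - (1 - k) * (W ^ 2 + W * H' + H' ^ 2)) / 2 := by
      intro H' h1 h2
      nlinarith [mul_nonneg (sub_nonneg.2 h1) (mul_nonneg (sub_nonneg.2 k1) (sub_nonneg.2 (WH.trans H1))),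
        mul_nonneg (sub_nonneg.2 h1) (mul_nonneg k0 H0), mul_nonneg (sub_nonneg.2 h1) (mul_nonneg k0 (H0.trans h1))]
    rcases le_total k W with hkW | hkW
    · have := fin2 hkW
      have := mono 1 H1 le_rfl
      linarith
    · have m1 := mono (W + (1 - k)) Hm (by linarith)
      have : k / 6 - k * (3 * W - 1) ^ 2 / 24 + (1 - k) * (W + (W + (1 - k))) / 2 + ((W + (1 - k)) ^ 2 - (1 - k) * (W ^ 2 + W * (W + (1 - k)) + (W + (1 - k)) ^ 2)) / 2 ≤ 59 / 108 := by
        refine le_trans ?_ fin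
        nlinarith [mul_nonneg (sub_nonneg.2 hkW) (mul_nonneg (sub_nonneg.2 k1) (sub_nonneg.2 k1)),
          mul_nonneg (sub_nonneg.2 hkW) (mul_nonneg k0 k0), mul_nonneg (sub_nonneg.2 hkW) (mul_nonneg k0 (sub_nonneg.2 k1)),
          mul_nonneg (sub_nonneg.2 hkW) (sub_nonneg.2 k1), mul_nonneg (sub_nonneg.2 hkW) (sub_nonneg.2 hkW),
          mul_nonneg k0 (mul_nonneg (sub_nonneg.2 hkW) (sub_nonneg.2 hkW)),
          mul_nonneg (sub_nonneg.2 k1) (mul_nonneg (sub_nonneg.2 hkW) (sub_nonneg.2 hkW)),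
          mul_nonneg W0 (mul_nonneg (sub_nonneg.2 hkW) (sub_nonneg.2 k1)),
          mul_nonneg W0 (mul_nonneg (sub_nonneg.2 hkW) k0), mul_nonneg W0 (sub_nonneg.2 hkW)]
      linarith

lemma sub_T (h : C3 a1 a2 b1 b2 k W r g T) (hH : W + b2 * (1 - k) < b1) :
    (∫ y in (0:ℝ)..1, (r y - 3 * g y)) + T ≤ 59 / 108 := by
  obtain ⟨a10, a11, a20, a21, b10, b11, b20, b21, k0, k1, W0, cr, cg, r1, r2, ga, gb, -, hT⟩ := id h
  have hm : 0 ≤ b2 * (1 - k) := mul_nonneg b20 (by linarith)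
  have hb1 : 0 < b1 := by linarith
  have hT := hT hb1 hH.le
  have hA : ∫ y in (0:ℝ)..k, (r y - 3 * g y) ≤ k / 6 - k * (3 * W - 1) ^ 2 / 24 := by
    rcases lt_or_ge W (a2 * k) with ht | ht
    · refine (h.trunc ht).trans ?_
      nlinarith [mul_nonneg k0 (sq_nonneg (W - 1))]
    · have e2 := int_le_cubic h.cf (a := 0) (b := k) k0
        ((W - a2 * k) - 3 / 2 * (W - a2 * k) ^ 2) (a2 - 3 * a2 * (W - a2 * k)) (-3 / 2 * a2 ^ 2) 0
        (fun y h0 h1 => by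
        have hw0 : 0 ≤ W - a2 * (k - y) := by nlinarith
        have hw1 : W - a2 * (k - y) ≤ W := by nlinarith
        rw [r1 y (by linarith) (by linarith), max_eq_right hw0]
        have := ga y (W - a2 * (k - y)) (by linarith) (by linarith) hw0 (by linarith)
        nlinarith [sq_nonneg (W - a2 * (k - y))])
      refine e2.trans ?_
      nlinarith [mul_nonneg k0 (sq_nonneg (3 * (W - 1 / 3) - 2 * a2 * k))]
  have hB := int_le_cubic h.cf (a := k) (b := 1) k1
      ((W - b2 * k) - 3 / (2 * b1) * (W - b2 * k) ^ 2) (b2 - 3 / b1 * b2 * (W - b2 * k))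
      (-3 / (2 * b1) * b2 ^ 2) 0 (fun y h0 h1 => by
        have hw0 : 0 ≤ W + b2 * (y - k) := by nlinarith
        have hw1 : W + b2 * (y - k) ≤ b1 := by nlinarith
        rw [r2 y h0 h1]
        have := gb y ((W + b2 * (y - k)) / b1) (by linarith) h1 (by positivity)
          (by rw [div_le_one hb1]; exact hw1)
        have e : (W + b2 * (y - k)) / b1 * (W + b2 * (y - k)) - b1 * ((W + b2 * (y - k)) / b1) ^ 2 / 2
          = (W + b2 * (y - k)) ^ 2 / (2 * b1) := by field_simp; ring
        rw [e] at this
        have e2 : W - b2 * k - 3 / (2 * b1) * (W - b2 * k) ^ 2 + (b2 - 3 / b1 * b2 * (W - b2 * k)) * y +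
          -3 / (2 * b1) * b2 ^ 2 * y ^ 2 + 0 * y ^ 3 = W + b2 * (y - k) - 3 * ((W + b2 * (y - k)) ^ 2 / (2 * b1)) := by
          field_simp; ring
        rw [e2]
        linarith)
  rw [int_split h.cf 0 k 1]
  have hi := T_ineq (H := W + b2 * (1 - k)) k0 k1 W0 (by linarith) hH.le b11 hb1 (by nlinarith)
  refine le_trans ?_ hi
  have e3 : ((W - b2 * k) - 3 / (2 * b1) * (W - b2 * k) ^ 2) * (1 - k) +
     (b2 - 3 / b1 * b2 * (W - b2 * k)) * (1 ^ 2 - k ^ 2) / 2 +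
      (-3 / (2 * b1) * b2 ^ 2) * (1 ^ 3 - k ^ 3) / 3 + (W + b2 * (1 - k)) ^ 2 / (2 * b1)
    = (1 - k) * (W + (W + b2 * (1 - k))) / 2
      + ((W + b2 * (1 - k)) ^ 2 - (1 - k) * (W ^ 2 + W * (W + b2 * (1 - k)) + (W + b2 * (1 - k)) ^ 2)) / (2 * b1) := by
    field_simp
    ring
  linarith

end C3

namespace C3
variable {a1 a2 b1 b2 k W : ℝ} {r g : ℝ → ℝ} {T : ℝ}

/-- contribution of the part above `k` -/
lemma upper (h : C3 a1 a2 b1 b2 k W r g T) {c : ℝ} (hc0 : 0 ≤ c) (hc1 : c ≤ 1) (hkc : k + c ≤ 1) :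
    ∫ y in k..1, (r y - 3 * g y) ≤ W * (-2 * (1 - k) + 3 / 2 * c ^ 2)
      + b2 * (-(1 - k) ^ 2 + c ^ 3 / 2) + 3 * b1 * ((1 - k) / 2 - c ^ 2 / 2 + c ^ 3 / 6) := by
  obtain ⟨a10, a11, a20, a21, b10, b11, b20, b21, k0, k1, W0, cr, cg, r1, r2, ga, gb, -, hT⟩ := id h
  rw [int_split h.cf k (k + c) 1]
  have e1 := int_le_cubic h.cf (a := k) (b := k + c) (by linarith)
    ((W - b2 * k) * (1 - 3 * (1 - c - k)) + 3 / 2 * b1 * (1 - c - k) ^ 2)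
    (b2 * (1 - 3 * (1 - c - k)) - 3 * (W - b2 * k) + 3 * b1 * (1 - c - k))
    (-3 * b2 + 3 / 2 * b1) 0 (fun y h0 h1 => by
      rw [r2 y h0 (by linarith)]
      have := gb y (1 - c + (y - k)) (by linarith) (by linarith) (by linarith) (by linarith)
      linarith)
  have e2 := int_le_cubic h.cf (a := k + c) (b := 1) (by linarith)
    (-2 * (W - b2 * k) + 3 / 2 * b1) (-2 * b2) 0 0 (fun y h0 h1 => by
      rw [r2 y (by linarith) (by linarith)]
      have := gb y 1 (by linarith) (by linarith) (by linarith) (by linarith)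
      linarith)
  refine (add_le_add e1 e2).trans (le_of_eq ?_)
  ring

lemma sub_N1 (h : C3 a1 a2 b1 b2 k W r g T) (hH : b1 ≤ W + b2 * (1 - k)) (hk : k ≤ 1 / 6) :
    (∫ y in (0:ℝ)..1, (r y - 3 * g y)) + T ≤ 59 / 108 := by
  obtain ⟨a10, a11, a20, a21, b10, b11, b20, b21, k0, k1, W0, cr, cg, r1, r2, ga, gb, hT, -⟩ := id h
  have hT := hT hH
  have hc2 : √(2 * (1 - 2 * k) / 3) ^ 2 = 2 * (1 - 2 * k) / 3 := Real.sq_sqrt (by linarith)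
  have hc0 : 0 ≤ √(2 * (1 - 2 * k) / 3) := Real.sqrt_nonneg _
  generalize √(2 * (1 - 2 * k) / 3) = c at *
  have hc5 : c ≤ 5 / 6 := by nlinarith
  have hc23 : 2 / 3 ≤ c := by nlinarith
  have hA := int_le_cubic h.cf (a := 0) (b := k) k0 (1 / 6) 0 0 0 (fun y h0 h1 => by
    rw [r1 y h0 h1]
    have g0 := h.g0 y h0 (by linarith)
    have := ga y (1 / 3) h0 (by linarith) (by norm_num) (by norm_num)
    rcases le_total (W - a2 * (k - y)) 0 with hw | hw
    · rw [max_eq_left hw]; linarith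
    · rw [max_eq_right hw]; linarith)
  have hB := h.upper (c := c) hc0 (by linarith) (by linarith)
  rw [int_split h.cf 0 k 1]
  have c30 : 0 ≤ c ^ 3 := by positivity
  have f1 : b1 * (1 / 2 - (1 - k) / 2 + c ^ 3 / 2) ≤ 1 / 2 - (1 - k) / 2 + c ^ 3 / 2 := by
    have : 0 ≤ 1 / 2 - (1 - k) / 2 + c ^ 3 / 2 := by linarith
    nlinarith
  have f2 : b2 * ((1 - k) * k + c ^ 3 / 2) ≤ (1 - k) * k + c ^ 3 / 2 := by
    have : 0 ≤ (1 - k) * k + c ^ 3 / 2 := by nlinarith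
    nlinarith
  have hk' : k = 1 / 2 - 3 / 4 * c ^ 2 := by linarith
  have f3 : 0 ≤ (c - 2 / 3) ^ 3 * (9 * c / 16 + 1 / 8) :=
    mul_nonneg (pow_nonneg (by linarith) _) (by linarith)
  have f4 : 1 / 2 - (1 - k) / 2 + c ^ 3 / 2 + ((1 - k) * k + c ^ 3 / 2) + k / 6 ≤ 59 / 108 := by
    rw [hk']; nlinarith
  have id : W * (-2 * (1 - k) + 3 / 2 * c ^ 2)
      + b2 * (-(1 - k) ^ 2 + c ^ 3 / 2) + 3 * b1 * ((1 - k) / 2 - c ^ 2 / 2 + c ^ 3 / 6)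
      + (W + b2 * (1 - k) - b1 / 2) = b1 * (1 / 2 - (1 - k) / 2 + c ^ 3 / 2) +
        b2 * ((1 - k) * k + c ^ 3 / 2) := by
    rw [hc2]; ring
  linarith

set_option maxHeartbeats 1000000 in
lemma sub_N2 (h : C3 a1 a2 b1 b2 k W r g T) (hH : b1 ≤ W + b2 * (1 - k)) (hk : 1 / 6 ≤ k)
    (hk2 : k ≤ 1 / 2) :
    (∫ y in (0:ℝ)..1, (r y - 3 * g y)) + T ≤ 59 / 108 := by
  obtain ⟨a10, a11, a20, a21, b10, b11, b20, b21, k0, k1, W0, cr, cg, r1, r2, ga, gb, hT, -⟩ := id h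
  have hT := hT hH
  have hkp : 0 < k := by linarith
  obtain ⟨e, he⟩ : ∃ e : ℝ, e = -(k - 1 / 6) ^ 2 / (2 * k) := ⟨_, rfl⟩
  have hek : e * k = -(k - 1 / 6) ^ 2 / 2 := by rw [he]; field_simp
  have he0 : e ≤ 0 := by
    rw [he]; apply div_nonpos_of_nonpos_of_nonneg _ (by linarith)
    nlinarith [sq_nonneg (k - 1 / 6)]
  have he1 : -(1 / 9) ≤ e := by
    have : 0 ≤ (e + 1 / 9) * k := by nlinarith
    have := nonneg_of_mul_nonneg_left this hkp
    linarith
  have hA : ∫ y in (0:ℝ)..k, (r y - 3 * g y) ≤ W * (3 * (e * k)) + k * (1 / 6 - e + 6 * e ^ 2) := by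
    rcases lt_or_ge W (a2 * k) with ht | ht
    · refine (h.trunc ht).trans ?_
      have : (W - W ^ 2) / 2 ≤ 3 * W * e + 1 / 6 - e + 6 * e ^ 2 := by
        nlinarith [sq_nonneg (W - 1 / 2 + 3 * e), sq_nonneg (e + 1 / 6)]
      nlinarith
    · obtain ⟨d, hd⟩ : ∃ d : ℝ, d = 6 * e / k := ⟨_, rfl⟩
      have hdk : d * k = 6 * e := by rw [hd]; field_simp
      have hd0 : d ≤ 0 := by
        rw [hd]; exact div_nonpos_of_nonpos_of_nonneg (by linarith) hkp.le
      have e2 := int_le_cubic h.cf (a := 0) (b := k) k0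
        ((W - a2 * k) * (1 - 3 * (1 / 3 + 2 * e)) + 3 / 2 * (1 / 3 + 2 * e) ^ 2)
        (a2 * (1 - 3 * (1 / 3 + 2 * e)) + 3 * d * (W - a2 * k) - 3 * d * (1 / 3 + 2 * e))
        (3 * d * a2 + 3 / 2 * d ^ 2) 0
        (fun y h0 h1 => by
        have hw0 : 0 ≤ W - a2 * (k - y) := by nlinarith
        rw [r1 y (by linarith) (by linarith), max_eq_right hw0]
        have hs0 : 0 ≤ 1 / 3 + 2 * e - d * y := by nlinarith
        have hs1 : 1 / 3 + 2 * e - d * y ≤ 1 := by nlinarith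
        have := ga y (1 / 3 + 2 * e - d * y) (by linarith) (by linarith) hs0 hs1
        nlinarith [sq_nonneg (1 / 3 + 2 * e - d * y)])
      refine e2.trans (le_of_eq ?_)
      have he' : e = d * k / 6 := by linarith
      rw [he']
      ring
  have hB := h.upper (c := 5 / 6 - k) (by linarith) (by linarith) (by linarith)
  rw [int_split h.cf 0 k 1]
  have c30 : 0 ≤ (5 / 6 - k) ^ 3 := pow_nonneg (by linarith) _
  have f1 : b1 * (-1 / 2 + 3 / 2 * (1 - k) - 3 / 2 * (5 / 6 - k) ^ 2 + (5 / 6 - k) ^ 3 / 2)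
     ≤ (-1 / 2 + 3 / 2 * (1 - k) - 3 / 2 * (5 / 6 - k) ^ 2 + (5 / 6 - k) ^ 3 / 2) := by
    apply mul_le_of_le_one_left _ b11
    clear * - hk hk2 c30
    nlinarith
  have f2 : b2 * ((1 - k) * k + (5 / 6 - k) ^ 3 / 2) ≤ (1 - k) * k + (5 / 6 - k) ^ 3 / 2 := by
    apply mul_le_of_le_one_left _ b21
    have := mul_nonneg (sub_nonneg.2 k1) k0
    linarith
  have f5 : k * e ^ 2 ≤ (k - 1 / 6) ^ 3 / 6 := by
    have q : k * e ^ 2 = -(k - 1 / 6) ^ 2 / 2 * e := by rw [← hek]; ring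
    have q2 : -e ≤ (k - 1 / 6) / 3 := by
      have : 0 ≤ ((k - 1 / 6) / 3 + e) * k := by nlinarith
      have := nonneg_of_mul_nonneg_left this hkp
      linarith
    rw [q]
    have := mul_le_mul_of_nonneg_left q2 (sq_nonneg (k - 1 / 6))
    linarith
  have id : W * (3 * (e * k)) + W * (-2 * (1 - k) + 3 / 2 * (5 / 6 - k) ^ 2) + W = 0 := by
    rw [hek]; ring
  have hfin : k * (1 / 6 - e + 6 * e ^ 2) + (-1 / 2 + 3 / 2 * (1 - k) - 3 / 2 * (5 / 6 - k) ^ 2 + (5 / 6 - k) ^ 3 / 2)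
     + ((1 - k) * k + (5 / 6 - k) ^ 3 / 2) ≤ 59 / 108 := by
    have q : k * (1 / 6 - e + 6 * e ^ 2) = k / 6 - e * k + 6 * (k * e ^ 2) := by ring
    rw [q, hek]
    linarith
  linarith

end C3

namespace C3
variable {a1 a2 b1 b2 k W : ℝ} {r g : ℝ → ℝ} {T : ℝ}

lemma trunc' (h : C3 a1 a2 b1 b2 k W r g T) (ht : W < a2 * k) :
    ∫ y in (0:ℝ)..k, (r y - 3 / 2 * r y ^ 2) ≤ k * (W - W ^ 2) / 2 := by
  obtain ⟨a10, a11, a20, a21, b10, b11, b20, b21, k0, k1, W0, cr, cg, r1, r2, ga, gb, -, -⟩ := id h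
  have cf : Continuous (fun y => r y - 3 / 2 * r y ^ 2) := by fun_prop
  have ha2 : 0 < a2 := by
    rcases a20.lt_or_eq with h | h
    · exact h
    · rw [← h] at ht; linarith
  have hW1 : W ≤ 1 := by nlinarith
  have htc : W / a2 * a2 = W := div_mul_cancel₀ _ ha2.ne'
  have ht0 : 0 ≤ W / a2 := div_nonneg W0 ha2.le
  have htk : W / a2 ≤ k := by rw [div_le_iff₀ ha2]; linarith
  generalize W / a2 = t at *
  rw [int_split cf 0 (k - t) k]
  have e1 := int_le_cubic cf (a := 0) (b := k - t) (by linarith) 0 0 0 0 (fun y h0 h1 => by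
    rw [r1 y h0 (by linarith), max_eq_left (by nlinarith)]
    simp)
  have e2 := int_le_cubic cf (a := k - t) (b := k) (by linarith)
    ((W - a2 * k) - 3 / 2 * (W - a2 * k) ^ 2) (a2 - 3 * a2 * (W - a2 * k)) (-3 / 2 * a2 ^ 2) 0
    (fun y h0 h1 => by
    have hw0 : 0 ≤ W - a2 * (k - y) := by nlinarith
    rw [r1 y (by linarith) (by linarith), max_eq_right hw0]
    apply le_of_eq; ring)
  have e3 : t * (W - W ^ 2) / 2 ≤ k * (W - W ^ 2) / 2 := by
    have : 0 ≤ W - W ^ 2 := by nlinarith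
    nlinarith
  have id : ((W - a2 * k) - 3 / 2 * (W - a2 * k) ^ 2) * (k - (k - t))
     + (a2 - 3 * a2 * (W - a2 * k)) * (k ^ 2 - (k - t) ^ 2) / 2
     + (-3 / 2 * a2 ^ 2) * (k ^ 3 - (k - t) ^ 3) / 3 = t * (W - W ^ 2) / 2 := by
    rw [← htc]; ring
  linarith

lemma lower3 (h : C3 a1 a2 b1 b2 k W r g T) {j σ : ℝ} (hj0 : 0 ≤ j) (hjk : j ≤ k) (hk : 0 < k)
    (hσ : 0 ≤ σ) (hσj : σ + j ≤ 1) :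
    ∃ α : ℝ, 0 ≤ α ∧ α ≤ 1 ∧ (∫ y in (0:ℝ)..j, (r y - 3 * g y)) + ∫ y in j..k, r y ≤
      k * W - α * k ^ 2 / 2 - 3 * (W * (σ * j + j ^ 2 / 2) - α * (k * (σ * j + j ^ 2 / 2)
        - (σ * j ^ 2 / 2 + j ^ 3 / 3))) + 3 / 2 * (σ ^ 2 * j + σ * j ^ 2 + j ^ 3 / 3) := by
  obtain ⟨a10, a11, a20, a21, b10, b11, b20, b21, k0, k1, W0, cr, cg, r1, r2, ga, gb, -, -⟩ := id h
  rcases lt_or_ge W (a2 * k) with ht | ht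
  · have hα0 : 0 ≤ W / k := div_nonneg W0 k0
    have hα2 : W / k ≤ a2 := by rw [div_le_iff₀ hk]; exact ht.le
    have hαk : W / k * k = W := div_mul_cancel₀ _ hk.ne'
    refine ⟨W / k, hα0, hα2.trans a21, ?_⟩
    generalize W / k = α at *
    have hα1 := hα2.trans a21
    have hW1 : W ≤ 1 := by nlinarith
    have cp : Continuous (fun y => r y - 3 / 2 * r y ^ 2) := by fun_prop
    have cq : Continuous (fun y => 3 / 2 * r y ^ 2) := by fun_prop
    have hr : ∀ y, 0 ≤ y → y ≤ k → 0 ≤ r y ∧ r y ≤ α * y ∧ r y ≤ 1 ∧ r y ^ 2 / 2 ≤ g y := by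
      intro y h0 h1
      rw [r1 y h0 h1]
      have hy1 : α * y ≤ 1 := by nlinarith
      have hle : W - a2 * (k - y) ≤ α * y := by nlinarith
      rcases le_total (W - a2 * (k - y)) 0 with hw | hw
      · rw [max_eq_left hw]
        have := h.g0 y h0 (by linarith)
        refine ⟨le_rfl, mul_nonneg hα0 h0, zero_le_one, by linarith⟩
      · rw [max_eq_right hw]
        have := ga y _ h0 (by linarith) hw (by linarith)
        refine ⟨hw, hle, by linarith, ?_⟩
        nlinarith [sq_nonneg (W - a2 * (k - y))]
    have e0 := h.trunc' ht
    have e1 : ∫ y in (0:ℝ)..j, (r y - 3 * g y) ≤ ∫ y in (0:ℝ)..j, (r y - 3 / 2 * r y ^ 2) := by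
      apply intervalIntegral.integral_mono_on hj0 (h.cf.intervalIntegrable _ _)
        (cp.intervalIntegrable _ _)
      intro y hy
      have := (hr y hy.1 (hy.2.trans hjk)).2.2.2
      linarith
    have e2 : ∫ y in j..k, (r y - 3 / 2 * r y ^ 2) = (∫ y in j..k, r y) - ∫ y in j..k, 3 / 2 * r y ^ 2 :=
      intervalIntegral.integral_sub (cr.intervalIntegrable _ _) (cq.intervalIntegrable _ _)
    have e3 := int_le_cubic cq hjk 0 0 (3 / 2 * α ^ 2) 0 (fun y h0 h1 => by
      obtain ⟨q0, q1, -, -⟩ := hr y (by linarith) h1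
      have := mul_self_le_mul_self q0 q1
      linarith)
    rw [int_split cp 0 j k] at e0
    have p1 : 0 ≤ (1 - α) ^ 2 * j ^ 3 / 3 + (1 - α) * σ * j ^ 2 + σ ^ 2 * j := by
      have : 0 ≤ 1 - α := by linarith
      positivity
    rw [← hαk] at e0 ⊢
    linarith
  · refine ⟨a2, a20, a21, ?_⟩
    have e1 := int_le_cubic h.cf hj0 ((W - a2 * k) * (1 - 3 * σ) + 3 / 2 * σ ^ 2)
      (a2 * (1 - 3 * σ) - 3 * (W - a2 * k) + 3 * σ) (-3 * a2 + 3 / 2) 0 (fun y h0 h1 => by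
        have hw0 : 0 ≤ W - a2 * (k - y) := by nlinarith
        rw [r1 y h0 (by linarith), max_eq_right hw0]
        have := ga y (σ + y) h0 (by linarith) (by linarith) (by linarith)
        nlinarith [sq_nonneg (σ + y)])
    have e2 := int_le_cubic cr hjk (W - a2 * k) a2 0 0 (fun y h0 h1 => by
        have hw0 : 0 ≤ W - a2 * (k - y) := by nlinarith
        rw [r1 y (by linarith) h1, max_eq_right hw0]
        linarith)
    linarith

lemma core3 (h : C3 a1 a2 b1 b2 k W r g T) (hH : b1 ≤ W + b2 * (1 - k)) {j c : ℝ} (hj0 : 0 ≤ j)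
    (hjk : j ≤ k) (hk : 0 < k) (hc2 : c ^ 2 = 2 / 3) (hc0 : 0 < c) (hc : c < 59 / 72) (hjc : j ≤ c)
    (hα : 0 ≤ -k ^ 2 / 2 + 3 * (k * ((1 - c) * j + j ^ 2 / 2) - ((1 - c) * j ^ 2 / 2 + j ^ 3 / 3)))
    (hb2 : -k ^ 2 / 2 + 3 * (k * ((1 - c) * j + j ^ 2 / 2) - ((1 - c) * j ^ 2 / 2 + j ^ 3 / 3)) ≤ c / 3)
    (hb1 : 0 ≤ c / 3 - 3 / 2 * ((1 - c) ^ 2 * j + (1 - c) * j ^ 2 + j ^ 3 / 3)) :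
    (∫ y in (0:ℝ)..1, (r y - 3 * g y)) + T ≤ 59 / 108 := by
  obtain ⟨a10, a11, a20, a21, b10, b11, b20, b21, k0, k1, W0, cr, cg, r1, r2, ga, gb, hT, -⟩ := id h
  have hT := hT hH
  obtain ⟨α, hα0, hα1, hL⟩ := h.lower3 (σ := 1 - c) hj0 hjk hk (by linarith) (by linarith)
  have e1 := int_le_cubic cr k1 (W - b2 * k) b2 0 0 (fun y h0 h1 => by
    rw [r2 y h0 h1]; linarith)
  have e2 := int_ge_cubic cg hjc ((W - b2 * k) * (1 - c) - b1 / 2 * (1 - c) ^ 2)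
    (b2 * (1 - c) + (W - b2 * k) - b1 * (1 - c)) (b2 - b1 / 2) 0 (fun y h0 h1 => by
      have := gb y (1 - c + y) (by linarith) (by linarith) (by linarith) (by linarith)
      linarith)
  have e3 := int_ge_cubic cg (a := c) (b := 1) (by linarith) (W - b2 * k - b1 / 2)
    b2 0 0 (fun y h0 h1 => by
      have := gb y 1 (by linarith) (by linarith) (by linarith) (by linarith)
      linarith)
  have hg : ∫ y in j..1, g y = (∫ y in j..c, g y) + ∫ y in c..1, g y := int_split cg _ _ _
  have hr : ∫ y in j..1, r y = (∫ y in j..k, r y) + ∫ y in k..1, r y := int_split cr _ _ _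
  have hf := h.int_f j 1
  rw [int_split h.cf 0 j 1, hf, hg, hr]
  have e4 := add_le_add e2 e3
  have q3 : c ^ 3 = 2 / 3 * c := by rw [pow_succ, hc2]
  obtain ⟨S0, hS0⟩ : ∃ S : ℝ, S = (1 - c) * j + j ^ 2 / 2 := ⟨_, rfl⟩
  obtain ⟨S1, hS1⟩ : ∃ S : ℝ, S = (1 - c) * j ^ 2 / 2 + j ^ 3 / 3 := ⟨_, rfl⟩
  obtain ⟨Q, hQ⟩ : ∃ S : ℝ, S = (1 - c) ^ 2 * j + (1 - c) * j ^ 2 + j ^ 3 / 3 := ⟨_, rfl⟩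
  have i1 : (((W - b2 * k) * (1 - c) - b1 / 2 * (1 - c) ^ 2) * (c - j) +
      (b2 * (1 - c) + (W - b2 * k) - b1 * (1 - c)) * (c ^ 2 - j ^ 2) / 2 +
       (b2 - b1 / 2) * (c ^ 3 - j ^ 3) / 3 + 0 * (c ^ 4 - j ^ 4) / 4) +
       ((W - b2 * k - b1 / 2) * (1 - c) + b2 * (1 ^ 2 - c ^ 2) / 2 + 0 * (1 ^ 3 - c ^ 3) / 3 +
        0 * (1 ^ 4 - c ^ 4) / 4) = W * (1 - c ^ 2 / 2 - S0) + b2 * ((1 / 2 - c ^ 3 / 6 - S1)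
          - k * (1 - c ^ 2 / 2 - S0)) - b1 / 2 * (1 - c ^ 2 + c ^ 3 / 3 - Q) := by
    rw [hS0, hS1, hQ]; ring
  rw [i1, q3, hc2] at e4
  rw [← hS0, ← hS1] at hL hα hb2
  rw [← hQ] at hL hb1
  have f1 : α * (-k ^ 2 / 2 + 3 * (k * S0 - S1)) ≤ -k ^ 2 / 2 + 3 * (k * S0 - S1) :=
    mul_le_of_le_one_left hα hα1
  have f2 : b1 * (c / 3 - 3 / 2 * Q) ≤ c / 3 - 3 / 2 * Q := mul_le_of_le_one_left hb1 b11
  have f3 : b2 * (c / 3 - (-k ^ 2 / 2 + 3 * (k * S0 - S1))) ≤ c / 3 - (-k ^ 2 / 2 + 3 * (k * S0 - S1)) :=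
    mul_le_of_le_one_left (by linarith) b21
  clear hα hb1 hb2 i1 e2 e3 hS0 hS1 hQ
  linarith

lemma sub_N3 (h : C3 a1 a2 b1 b2 k W r g T) (hH : b1 ≤ W + b2 * (1 - k)) (hk : 1 / 2 ≤ k) :
    (∫ y in (0:ℝ)..1, (r y - 3 * g y)) + T ≤ 59 / 108 := by
  have k1 := h.k1
  obtain ⟨c, hc0, hc2, hc3, hc4⟩ := exists_c
  have hc5 : c < 817 / 1000 := by nlinarith
  have hc6 : 816 / 1000 < c := by nlinarith
  rcases le_total k (3 / 5) with hk' | hk'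
  · apply h.core3 hH (j := 1 / 2) (c := c) (by norm_num) hk (by linarith) hc2 hc0 hc3 (by linarith)
    · nlinarith
    · nlinarith
    · nlinarith
  · apply h.core3 hH (j := 3 / 5) (c := c) (by norm_num) hk' (by linarith) hc2 hc0 hc3 (by linarith)
    · nlinarith
    · nlinarith
    · nlinarith

lemma final (h : C3 a1 a2 b1 b2 k W r g T) :
    (∫ y in (0:ℝ)..1, r y) + T - 3 * ∫ y in (0:ℝ)..1, g y ≤ 59 / 108 := by
  have hf := h.int_f 0 1
  have : (∫ y in (0:ℝ)..1, (r y - 3 * g y)) + T ≤ 59 / 108 := by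
    rcases lt_or_ge (W + b2 * (1 - k)) b1 with hH | hH
    · exact h.sub_T hH
    · rcases le_total k (1 / 6) with h1 | h1
      · exact h.sub_N1 hH h1
      · rcases le_total k (1 / 2) with h2 | h2
        · exact h.sub_N2 hH h1 h2
        · exact h.sub_N3 hH h2
  linarith

end C3

def Phi (a b : (ℝ × ℝ) × ℝ) : ℝ :=
  (∫ y in (0:ℝ)..1, UU a b 1 y) + (∫ x in (0:ℝ)..1, UU a b x 1)
      - 3 * ∫ y in (0:ℝ)..1, ∫ x in (0:ℝ)..1, UU a b x y

lemma UU_comm (a b : (ℝ × ℝ) × ℝ) : UU a b = UU b a := by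
  funext x y
  unfold UU
  rw [max_comm (util (x, y) a)]

lemma Phi_comm (a b : (ℝ × ℝ) × ℝ) : Phi a b = Phi b a := by
  unfold Phi
  rw [UU_comm]

def flip2 (a : (ℝ × ℝ) × ℝ) : (ℝ × ℝ) × ℝ := ((a.1.2, a.1.1), a.2)

lemma util_flip (a : (ℝ × ℝ) × ℝ) (x y : ℝ) : util (y, x) (flip2 a) = util (x, y) a := by
  unfold util flip2
  dsimp only
  ring

lemma UU_flip (a b : (ℝ × ℝ) × ℝ) (x y : ℝ) : UU (flip2 a) (flip2 b) y x = UU a b x y := by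
  unfold UU
  rw [util_flip, util_flip]

lemma Phi_flip (a b : (ℝ × ℝ) × ℝ) : Phi (flip2 a) (flip2 b) = Phi a b := by
  unfold Phi
  simp only [UU_flip]
  rw [int_swap (UU_cont a b)]
  ring

lemma valid_flip {a : (ℝ × ℝ) × ℝ} (h : ValidItem a) : ValidItem (flip2 a) :=
  ⟨h.2.1, h.1, h.2.2⟩

lemma UU_contx (a b : (ℝ × ℝ) × ℝ) (y : ℝ) : Continuous (fun x => UU a b x y) :=
  (UU_cont a b).comp (continuous_id.prodMk continuous_const)

lemma UU_conty (a b : (ℝ × ℝ) × ℝ) (x : ℝ) : Continuous (fun y => UU a b x y) :=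
  (UU_cont a b).comp (continuous_const.prodMk continuous_id)

lemma UU_ge0 (a b : (ℝ × ℝ) × ℝ) (x y : ℝ) : 0 ≤ UU a b x y := le_max_left _ _
lemma UU_gea (a b : (ℝ × ℝ) × ℝ) (x y : ℝ) : util (x, y) a ≤ UU a b x y :=
  le_trans (le_max_left _ _) (le_max_right _ _)
lemma UU_geb (a b : (ℝ × ℝ) × ℝ) (x y : ℝ) : util (x, y) b ≤ UU a b x y :=
  le_trans (le_max_right _ _) (le_max_right _ _)

/-- right edge of two-piece type, top edge simple -/
lemma case_three {a b : (ℝ × ℝ) × ℝ} (ha : ValidItem a) (hb : ValidItem b)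
    (hD : util (1, 1) a ≤ util (1, 1) b) {y0 : ℝ} (hy0 : 0 ≤ y0) (hy1 : y0 ≤ 1)
    (h0 : 0 < util (1, y0) a) (h1 : util (1, y0) b < util (1, y0) a)
    (hTop : ∀ x, 0 ≤ x → x ≤ 1 → util (x, 1) a ≤ max 0 (util (x, 1) b)) :
    Phi a b ≤ 59 / 108 := by
  obtain ⟨⟨a1, a2⟩, p⟩ := a
  obtain ⟨⟨b1, b2⟩, q⟩ := b
  obtain ⟨⟨a10, a11⟩, ⟨a20, a21⟩, p0⟩ := ha
  obtain ⟨⟨b10, b11⟩, ⟨b20, b21⟩, q0⟩ := hb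
  dsimp only at a10 a11 a20 a21 p0 b10 b11 b20 b21 q0
  have hu : ∀ x y c1 c2 c, util (x, y) ((c1, c2), c) = x * c1 + y * c2 - c := fun _ _ _ _ _ => rfl
  simp only [hu, one_mul] at hD h0 h1 hTop
  have hd : 0 < b2 - a2 := by nlinarith
  obtain ⟨k, hk⟩ : ∃ k : ℝ, (b2 - a2) * (1 - k) = (b1 + b2 - q) - (a1 + a2 - p) := by
    refine ⟨1 - ((b1 + b2 - q) - (a1 + a2 - p)) / (b2 - a2), ?_⟩
    field_simp
    ring
  have hk1 : k ≤ 1 := by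
    by_contra! hc
    nlinarith
  have hky : y0 ≤ k := by
    by_contra! hc
    nlinarith
  obtain ⟨W, hW⟩ : ∃ W : ℝ, W = a1 + k * a2 - p := ⟨_, rfl⟩
  have hW0 : 0 < W := by nlinarith
  have key : C3 a1 a2 b1 b2 k W (fun y => UU ((a1, a2), p) ((b1, b2), q) 1 y)
      (fun y => ∫ x in (0:ℝ)..1, UU ((a1, a2), p) ((b1, b2), q) x y)
      (∫ x in (0:ℝ)..1, UU ((a1, a2), p) ((b1, b2), q) x 1) := by
    have hH : W + b2 * (1 - k) = b1 + b2 - q := by linarith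
    have hT : ∫ x in (0:ℝ)..1, UU ((a1, a2), p) ((b1, b2), q) x 1 ≤
        ∫ x in (0:ℝ)..1, max 0 (W + b2 * (1 - k) - b1 * (1 - x)) := by
      apply intervalIntegral.integral_mono_on zero_le_one ((UU_contx _ _ _).intervalIntegrable _ _)
        (Continuous.intervalIntegrable (by fun_prop) _ _)
      intro x hx
      have e : W + b2 * (1 - k) - b1 * (1 - x) = x * b1 + b2 - q := by linarith
      rw [e]
      unfold UU
      simp only [hu, one_mul]
      exact max_le (le_max_left _ _) (max_le (hTop x hx.1 hx.2) (le_max_right _ _))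
    refine ⟨a10, a11, a20, a21, b10, b11, b20, b21, hy0.trans hky, hk1, hW0.le, UU_conty _ _ _,
      cont_inner (UU_cont _ _), ?_, ?_, ?_, ?_, ?_, ?_⟩
    · intro y h h'
      have e : W - a2 * (k - y) = a1 + y * a2 - p := by linarith
      rw [e]
      unfold UU
      simp only [hu, one_mul]
      congr 1
      apply max_eq_left
      nlinarith
    · intro y h h'
      have e : W + b2 * (y - k) = b1 + y * b2 - q := by linarith
      have e0 : 0 ≤ W + b2 * (y - k) := by nlinarith
      rw [e] at e0 ⊢
      unfold UU
      simp only [hu, one_mul]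
      rw [max_eq_right, max_eq_right]
      · nlinarith
      · exact le_trans e0 (le_max_right _ _)
    · intro y s _ _ hs0 hs1
      apply slice_ge (UU_contx _ _ _) _ _ _ hs0 hs1 (fun x _ _ => UU_ge0 _ _ _ _)
      intro x _ _
      refine le_trans (le_of_eq ?_) (UU_gea _ _ _ _)
      rw [hu, hW]; ring
    · intro y s _ _ hs0 hs1
      apply slice_ge (UU_contx _ _ _) _ _ _ hs0 hs1 (fun x _ _ => UU_ge0 _ _ _ _)
      intro x _ _
      refine le_trans (le_of_eq ?_) (UU_geb _ _ _ _)
      rw [hu]; linarith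
    · intro h
      exact hT.trans (lin_int_le b10 h)
    · intro h h'
      refine hT.trans (pos_int_le h ?_ h')
      nlinarith
  exact key.final

lemma case_simple {a b : (ℝ × ℝ) × ℝ} (hb : ValidItem b)
    (hRight : ∀ y, 0 ≤ y → y ≤ 1 → util (1, y) a ≤ max 0 (util (1, y) b))
    (hTop : ∀ x, 0 ≤ x → x ≤ 1 → util (x, 1) a ≤ max 0 (util (x, 1) b)) :
    Phi a b ≤ 59 / 108 := by
  have hS := SI_le hb.1.1 hb.2.1.1 (util (1, 1) b)
  have h1 := hb.1.2
  have h2 := hb.2.1.2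
  have e1 : ∫ y in (0:ℝ)..1, UU a b 1 y ≤
      ∫ y in (0:ℝ)..1, max 0 (util (1, 1) b - b.1.2 * (1 - y)) := by
    apply intervalIntegral.integral_mono_on zero_le_one ((UU_conty _ _ _).intervalIntegrable _ _)
        (Continuous.intervalIntegrable (by fun_prop) _ _)
    intro y hy
    have e : util (1, 1) b - b.1.2 * (1 - y) = util (1, y) b := by
      unfold util; dsimp only; ring
    rw [e]
    exact max_le (le_max_left _ _) (max_le (hRight y hy.1 hy.2) (le_max_right _ _))
  have e2 : ∫ x in (0:ℝ)..1, UU a b x 1 ≤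
      ∫ x in (0:ℝ)..1, max 0 (util (1, 1) b - b.1.1 * (1 - x)) := by
    apply intervalIntegral.integral_mono_on zero_le_one ((UU_contx _ _ _).intervalIntegrable _ _)
        (Continuous.intervalIntegrable (by fun_prop) _ _)
    intro y hy
    have e : util (1, 1) b - b.1.1 * (1 - y) = util (y, 1) b := by
      unfold util; dsimp only; ring
    rw [e]
    exact max_le (le_max_left _ _) (max_le (hTop y hy.1 hy.2) (le_max_right _ _))
  have hu : Continuous (Function.uncurry
    (fun x y : ℝ => max 0 (util (1, 1) b - b.1.1 * (1 - x) - b.1.2 * (1 - y)))) := by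
    unfold Function.uncurry; fun_prop
  have e3 : ∫ y in (0:ℝ)..1, ∫ x in (0:ℝ)..1,
      max 0 (util (1, 1) b - b.1.1 * (1 - x) - b.1.2 * (1 - y)) ≤
      ∫ y in (0:ℝ)..1, ∫ x in (0:ℝ)..1, UU a b x y := by
    apply intervalIntegral.integral_mono_on zero_le_one ((cont_inner hu).intervalIntegrable _ _)
        ((cont_inner (UU_cont a b)).intervalIntegrable _ _)
    intro y _
    apply intervalIntegral.integral_mono_on zero_le_one
        (Continuous.intervalIntegrable (by fun_prop) _ _)
        ((UU_contx _ _ _).intervalIntegrable _ _)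
    intro x _
    have e : util (1, 1) b - b.1.1 * (1 - x) - b.1.2 * (1 - y) = util (x, y) b := by
      unfold util; dsimp only; ring
    rw [e]
    exact max_le (UU_ge0 _ _ _ _) (UU_geb _ _ _ _)
  unfold Phi
  unfold SI at hS
  linarith

lemma case_two {a b : (ℝ × ℝ) × ℝ} (ha : ValidItem a) (hb : ValidItem b)
    (hD : util (1, 1) a ≤ util (1, 1) b) {y0 : ℝ} (hy1 : y0 ≤ 1)
    (h0 : 0 < util (1, y0) a) (h1 : util (1, y0) b < util (1, y0) a)
    {x0 : ℝ} (hx1 : x0 ≤ 1)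
    (h2 : 0 < util (x0, 1) a) (h3 : util (x0, 1) b < util (x0, 1) a) :
    Phi a b ≤ 59 / 108 := by
  obtain ⟨⟨a1, a2⟩, p⟩ := a
  obtain ⟨⟨b1, b2⟩, q⟩ := b
  obtain ⟨⟨a10, a11⟩, ⟨a20, a21⟩, p0⟩ := ha
  obtain ⟨⟨b10, b11⟩, ⟨b20, b21⟩, q0⟩ := hb
  dsimp only at a10 a11 a20 a21 p0 b10 b11 b20 b21 q0
  have hu : ∀ x y c1 c2 c, util (x, y) ((c1, c2), c) = x * c1 + y * c2 - c := fun _ _ _ _ _ => rfl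
  simp only [hu, one_mul] at hD h0 h1 h2 h3
  obtain ⟨L, hL⟩ : ∃ L : ℝ, L = a1 + a2 - p := ⟨_, rfl⟩
  obtain ⟨δ, hδ⟩ : ∃ δ : ℝ, δ = (b1 + b2 - q) - (a1 + a2 - p) := ⟨_, rfl⟩
  have hδ0 : 0 ≤ δ := by linarith
  have hd1 : 0 < b1 - a1 := by nlinarith
  have hd2 : 0 < b2 - a2 := by nlinarith
  have k1 : a1 * (1 - x0) ≤ L := by linarith
  have k2 : a2 * (1 - y0) ≤ L := by linarith
  have k3 : δ ≤ (b1 - a1) * (1 - x0) := by linarith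
  have k4 : δ ≤ (b2 - a2) * (1 - y0) := by linarith
  have L0 : 0 ≤ L := le_trans (mul_nonneg a10 (by linarith)) k1
  have inner : ∀ x y : ℝ, x ≤ 1 → y ≤ 1 → max 0 (L - a1 * (1 - x) - a2 * (1 - y))
      + max 0 (δ - (b1 - a1) * (1 - x) - (b2 - a2) * (1 - y))
      ≤ UU ((a1, a2), p) ((b1, b2), q) x y := by
    intro x y hx hy
    have ga := UU_gea ((a1, a2), p) ((b1, b2), q) x y
    have gb := UU_geb ((a1, a2), p) ((b1, b2), q) x y
    have gz := UU_ge0 ((a1, a2), p) ((b1, b2), q) x y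
    rw [hu] at ga gb
    rcases le_or_gt (δ - (b1 - a1) * (1 - x) - (b2 - a2) * (1 - y)) 0 with h | h
    · rw [max_eq_left h, add_zero]
      apply max_le gz
      linarith
    · have hδp : 0 < δ := by
        have := mul_nonneg hd1.le (sub_nonneg.2 hx)
        have := mul_nonneg hd2.le (sub_nonneg.2 hy)
        linarith
      have m1 : δ * (a1 * (1 - x)) ≤ L * ((b1 - a1) * (1 - x)) := by
        have s1 := mul_le_mul_of_nonneg_right k3 (mul_nonneg a10 (sub_nonneg.2 hx))
        have s2 := mul_le_mul_of_nonneg_right k1 (mul_nonneg hd1.le (sub_nonneg.2 hx))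
        linarith
      have m2 : δ * (a2 * (1 - y)) ≤ L * ((b2 - a2) * (1 - y)) := by
        have s1 := mul_le_mul_of_nonneg_right k4 (mul_nonneg a20 (sub_nonneg.2 hy))
        have s2 := mul_le_mul_of_nonneg_right k2 (mul_nonneg hd2.le (sub_nonneg.2 hy))
        linarith
      have m3 : 0 ≤ L * (δ - (b1 - a1) * (1 - x) - (b2 - a2) * (1 - y)) := mul_nonneg L0 h.le
      have m4 : 0 ≤ (L - a1 * (1 - x) - a2 * (1 - y)) * δ := by linarith
      have m5 := nonneg_of_mul_nonneg_left m4 hδp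
      rw [max_eq_right h.le, max_eq_right m5]
      linarith
  have edge : ∀ x y : ℝ, UU ((a1, a2), p) ((b1, b2), q) x y ≤
      max 0 (L - a1 * (1 - x) - a2 * (1 - y))
      + max 0 (δ - (b1 - a1) * (1 - x) - (b2 - a2) * (1 - y)) := by
    intro x y
    have z1 := le_max_left 0 (L - a1 * (1 - x) - a2 * (1 - y))
    have z2 := le_max_right 0 (L - a1 * (1 - x) - a2 * (1 - y))
    have z3 := le_max_left 0 (δ - (b1 - a1) * (1 - x) - (b2 - a2) * (1 - y))
    have z4 := le_max_right 0 (δ - (b1 - a1) * (1 - x) - (b2 - a2) * (1 - y))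
    refine max_le (by linarith) (max_le ?_ ?_) <;> rw [hu] <;> linarith
  have cA : Continuous (Function.uncurry
    (fun x y : ℝ => max 0 (L - a1 * (1 - x) - a2 * (1 - y)))) := by
    unfold Function.uncurry; fun_prop
  have cD : Continuous (Function.uncurry
    (fun x y : ℝ => max 0 (δ - (b1 - a1) * (1 - x) - (b2 - a2) * (1 - y)))) := by
    unfold Function.uncurry; fun_prop
  have e1 : ∫ y in (0:ℝ)..1, UU ((a1, a2), p) ((b1, b2), q) 1 y ≤
      ∫ y in (0:ℝ)..1, (max 0 (L - a2 * (1 - y)) + max 0 (δ - (b2 - a2) * (1 - y))) := by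
    apply intervalIntegral.integral_mono_on zero_le_one ((UU_conty _ _ _).intervalIntegrable _ _)
        (Continuous.intervalIntegrable (by fun_prop) _ _)
    intro y _
    have := edge 1 y
    simpa using this
  have e2 : ∫ x in (0:ℝ)..1, UU ((a1, a2), p) ((b1, b2), q) x 1 ≤
      ∫ x in (0:ℝ)..1, (max 0 (L - a1 * (1 - x)) + max 0 (δ - (b1 - a1) * (1 - x))) := by
    apply intervalIntegral.integral_mono_on zero_le_one ((UU_contx _ _ _).intervalIntegrable _ _)
        (Continuous.intervalIntegrable (by fun_prop) _ _)
    intro x _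
    have := edge x 1
    simpa using this
  rw [intervalIntegral.integral_add (Continuous.intervalIntegrable (by fun_prop) _ _)
    (Continuous.intervalIntegrable (by fun_prop) _ _)] at e1 e2
  have iA := cont_inner cA
  have iD := cont_inner cD
  have e3 : ∫ y in (0:ℝ)..1, ((∫ x in (0:ℝ)..1, max 0 (L - a1 * (1 - x) - a2 * (1 - y)))
      + ∫ x in (0:ℝ)..1, max 0 (δ - (b1 - a1) * (1 - x) - (b2 - a2) * (1 - y))) ≤
      ∫ y in (0:ℝ)..1, ∫ x in (0:ℝ)..1, UU ((a1, a2), p) ((b1, b2), q) x y := by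
    apply intervalIntegral.integral_mono_on zero_le_one ((iA.add iD).intervalIntegrable _ _)
        ((cont_inner (UU_cont _ _)).intervalIntegrable _ _)
    intro y hy
    simp only [Pi.add_apply]
    rw [← intervalIntegral.integral_add (Continuous.intervalIntegrable (by fun_prop) _ _)
      (Continuous.intervalIntegrable (by fun_prop) _ _)]
    apply intervalIntegral.integral_mono_on zero_le_one
        (Continuous.intervalIntegrable (by fun_prop) _ _)
        ((UU_contx _ _ _).intervalIntegrable _ _)
    intro x hx
    exact inner x y hx.2 hy.2
  rw [intervalIntegral.integral_add (iA.intervalIntegrable _ _) (iD.intervalIntegrable _ _)] at e3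
  have sA := SI_le a10 a20 L
  have sD := SI_le hd1.le hd2.le δ
  unfold Phi
  unfold SI at sA sD
  linarith

lemma Phi_le_aux {a b : (ℝ × ℝ) × ℝ} (ha : ValidItem a) (hb : ValidItem b)
    (hD : util (1, 1) a ≤ util (1, 1) b) : Phi a b ≤ 59 / 108 := by
  by_cases hR : ∀ y, 0 ≤ y → y ≤ 1 → util (1, y) a ≤ max 0 (util (1, y) b)
  · by_cases hT : ∀ x, 0 ≤ x → x ≤ 1 → util (x, 1) a ≤ max 0 (util (x, 1) b)
    · exact case_simple hb hR hT
    · push Not at hT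
      obtain ⟨x0, hx0, hx1, hx⟩ := hT
      rw [max_lt_iff] at hx
      rw [← Phi_flip]
      apply case_three (valid_flip ha) (valid_flip hb) (by simpa only [util_flip] using hD) hx0 hx1
      · rw [util_flip]; exact hx.1
      · rw [util_flip, util_flip]; exact hx.2
      · intro y h h'
        rw [util_flip, util_flip]; exact hR y h h'
  · push Not at hR
    obtain ⟨y0, hy0, hy1, hy⟩ := hR
    rw [max_lt_iff] at hy
    by_cases hT : ∀ x, 0 ≤ x → x ≤ 1 → util (x, 1) a ≤ max 0 (util (x, 1) b)
    · exact case_three ha hb hD hy0 hy1 hy.1 hy.2 hT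
    · push Not at hT
      obtain ⟨x0, hx0, hx1, hx⟩ := hT
      rw [max_lt_iff] at hx
      exact case_two ha hb hD hy1 hy.1 hy.2 hx1 hx.1 hx.2

lemma Phi_le {a b : (ℝ × ℝ) × ℝ} (ha : ValidItem a) (hb : ValidItem b) : Phi a b ≤ 59 / 108 := by
  rcases le_total (util (1, 1) a) (util (1, 1) b) with h | h
  · exact Phi_le_aux ha hb h
  · rw [Phi_comm]; exact Phi_le_aux hb ha h

lemma menu_pair {M : Finset ((ℝ × ℝ) × ℝ)} (hM : IsMenu M) (hcard : M.card ≤ 3) :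
    ∃ a b : (ℝ × ℝ) × ℝ, ValidItem a ∧ ValidItem b ∧
      ∀ it, it ∈ M ↔ it = ((0, 0), 0) ∨ it = a ∨ it = b := by
  classical
  obtain ⟨hz, hv⟩ := hM
  have hc : (M.erase ((0, 0), 0)).card ≤ 2 := by
    rw [Finset.card_erase_of_mem hz]; omega
  have hmem : ∀ it, it ∈ M ↔ it = ((0, 0), 0) ∨ it ∈ M.erase ((0, 0), 0) := by
    intro it
    rw [Finset.mem_erase]
    by_cases h : it = ((0, 0), 0)
    · simp [h, hz]
    · simp [h]
  have hz' : ValidItem ((0, 0), 0) := hv _ hz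
  have hve : ∀ it ∈ M.erase ((0, 0), 0), ValidItem it := fun it h => hv it (Finset.mem_of_mem_erase h)
  generalize M.erase ((0, 0), 0) = N at *
  obtain h | h | h : N.card = 0 ∨ N.card = 1 ∨ N.card = 2 := by omega
  · rw [Finset.card_eq_zero] at h
    subst h
    refine ⟨((0, 0), 0), ((0, 0), 0), hz', hz', fun it => ?_⟩
    rw [hmem]; simp
  · obtain ⟨a, rfl⟩ := Finset.card_eq_one.1 h
    refine ⟨a, a, hve a (by simp), hve a (by simp), fun it => ?_⟩
    rw [hmem]; simp
  · obtain ⟨a, b, -, rfl⟩ := Finset.card_eq_two.1 h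
    refine ⟨a, b, hve a (by simp), hve b (by simp), fun it => ?_⟩
    rw [hmem]; simp

/-- every menu on `[0,1]²` with at most 3 items has revenue at most
`59/108` under the uniform distribution on `[0,1]²`. -/
theorem three_menu_revenue_le (M : Finset ((ℝ × ℝ) × ℝ))
    (hM : IsMenu M) (hcard : M.card ≤ 3) :
    rev M ≤ 59 / 108 := by
  obtain ⟨a, b, ha, hb, h⟩ := menu_pair hM hcard
  exact (rev_le ha hb h).trans (Phi_le ha hb)
end
end

section
/- The menu M = {((0,0),0), ((1,0),2/3), ((1,1),5/6)} (sell the first item at price 2/3 or the bundle of both items at price 5/6) has revenue exactly 59/108 under the uniform distribution on [0,1]^2. -/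
open MeasureTheory Real

noncomputable section

def fP (v : ℝ × ℝ) : ℝ :=
  if v.1 < 2/3 then (if 5/6 - v.1 ≤ v.2 then 5/6 else 0) else (if 1/6 ≤ v.2 then 5/6 else 2/3)

lemma buyerPrice_eq (v : ℝ × ℝ) (h1 : 0 ≤ v.1) (h2 : 0 ≤ v.2) :
    buyerPrice {(((0 : ℝ), (0 : ℝ)), (0 : ℝ)),
         (((1 : ℝ), (0 : ℝ)), (2 / 3 : ℝ)),
         (((1 : ℝ), (1 : ℝ)), (5 / 6 : ℝ))} v = fP v := by
  apply IsGreatest.csSup_eq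
  constructor
  · simp only [Set.mem_ofPred_eq, Finset.mem_insert, Finset.mem_singleton, exists_eq_or_imp,
      forall_eq_or_imp, forall_eq, exists_eq_left, util, fP]
    split_ifs
    · right; right; refine ⟨rfl, ?_, ?_, ?_⟩ <;> linarith
    · left; refine ⟨rfl, ?_, ?_, ?_⟩ <;> linarith
    · right; right; refine ⟨rfl, ?_, ?_, ?_⟩ <;> linarith
    · right; left; refine ⟨rfl, ?_, ?_, ?_⟩ <;> linarith
  · intro p hp
    simp only [Set.mem_ofPred_eq, Finset.mem_insert, Finset.mem_singleton, exists_eq_or_imp,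
      forall_eq_or_imp, forall_eq, exists_eq_left, util, fP] at hp ⊢
    rcases hp with ⟨rfl, a, b, c⟩ | ⟨rfl, a, b, c⟩ | ⟨rfl, a, b, c⟩ <;> split_ifs <;> linarith

lemma int_step (a b c : ℝ) (h0 : 0 ≤ c) (h1 : c ≤ 1) :
    ∫ y in Set.Icc (0 : ℝ) 1, (if c ≤ y then a else b) = a * (1 - c) + b * c := by
  have e : (fun y : ℝ => if c ≤ y then a else b) =
      fun y => (Set.Ici c).indicator (fun _ => a - b) y + b := by
    funext y
    by_cases h : c ≤ y <;> simp [Set.indicator, h]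
  have e2 : Set.Icc (0 : ℝ) 1 ∩ Set.Ici c = Set.Icc c 1 := by
    ext y; simp only [Set.mem_inter_iff, Set.mem_Icc, Set.mem_Ici]
    constructor
    · rintro ⟨⟨_, _⟩, _⟩; constructor <;> linarith
    · rintro ⟨_, _⟩; refine ⟨⟨?_, ?_⟩, ?_⟩ <;> linarith
  rw [e, integral_add, setIntegral_indicator measurableSet_Ici, e2]
  · simp [h1]; ring
  · exact (integrable_const (a - b)).indicator measurableSet_Ici
  · exact integrable_const b

lemma fP_meas : Measurable fP := by
  unfold fP
  refine Measurable.ite (measurableSet_lt (by fun_prop) (by fun_prop)) ?_ ?_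
  · exact Measurable.ite (measurableSet_le (by fun_prop) (by fun_prop)) (by fun_prop) (by fun_prop)
  · exact Measurable.ite (measurableSet_le (by fun_prop) (by fun_prop)) (by fun_prop) (by fun_prop)

/-- the menu `{((0,0),0), ((1,0),2/3), ((1,1),5/6)}` has revenue
exactly `59/108` under the uniform distribution on `[0,1]²`. -/
theorem optimal_three_menu_revenue :
    rev {(((0 : ℝ), (0 : ℝ)), (0 : ℝ)),
         (((1 : ℝ), (0 : ℝ)), (2 / 3 : ℝ)),
         (((1 : ℝ), (1 : ℝ)), (5 / 6 : ℝ))} = 59 / 108 := by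
  unfold rev
  have hm : MeasurableSet (Set.Icc ((0 : ℝ), (0 : ℝ)) ((1 : ℝ), (1 : ℝ))) := measurableSet_Icc
  rw [setIntegral_congr_fun hm (fun v hv => buyerPrice_eq v hv.1.1 hv.1.2)]
  rw [← Set.Icc_prod_Icc, Measure.volume_eq_prod, setIntegral_prod]
  · have hI : Set.Icc (0:ℝ) 1 = Set.Ico 0 (2/3) ∪ Set.Icc (2/3) 1 :=
      (Set.Ico_union_Icc_eq_Icc (by norm_num) (by norm_num)).symm
    have c1 : Set.EqOn (fun x : ℝ => ∫ y in Set.Icc (0 : ℝ) 1, fP (x, y))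
        (fun x => 5/6 * (1/6 + x)) (Set.Ico 0 (2/3)) := by
      rintro x ⟨h0, h1⟩
      simp only [fP, h1, if_true]
      rw [int_step _ _ _ (by linarith) (by linarith)]; ring
    have c2 : Set.EqOn (fun x : ℝ => ∫ y in Set.Icc (0 : ℝ) 1, fP (x, y))
        (fun x => 29/36) (Set.Icc (2/3) 1) := by
      rintro x ⟨h0, h1⟩
      simp only [fP, not_lt.mpr h0, if_false]
      rw [int_step _ _ _ (by norm_num) (by norm_num)]; norm_num
    have i1 : IntegrableOn (fun x : ℝ => 5/6 * (1/6 + x)) (Set.Ico 0 (2/3)) :=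
      (Continuous.integrableOn_Icc (by fun_prop)).mono_set Set.Ico_subset_Icc_self
    have i2 : IntegrableOn (fun x : ℝ => (29/36 : ℝ)) (Set.Icc (2/3) 1) :=
      Continuous.integrableOn_Icc (by fun_prop)
    have key : ∫ x in Set.Ico (0:ℝ) (2/3) ∪ Set.Icc (2/3) 1,
        ∫ y in Set.Icc (0 : ℝ) 1, fP (x, y) = 59/108 := by
      rw [setIntegral_union _ measurableSet_Icc
        (i1.congr_fun c1.symm measurableSet_Ico) (i2.congr_fun c2.symm measurableSet_Icc),
        setIntegral_congr_fun measurableSet_Ico c1, setIntegral_congr_fun measurableSet_Icc c2,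
        integral_Ico_eq_integral_Ioc, ← intervalIntegral.integral_of_le (by norm_num)]
      · rw [intervalIntegral.integral_const_mul, intervalIntegral.integral_add
          (by simp) (by simp)]
        simp
        norm_num
      · rw [Set.disjoint_left]
        rintro x ⟨_, h⟩ ⟨h', _⟩
        linarith
    rw [← hI] at key
    exact key
  · refine Measure.integrableOn_of_bounded (M := 1) ?_ fP_meas.aestronglyMeasurable ?_
    · rw [Measure.prod_prod]; simp
    · refine Filter.Eventually.of_forall fun v => ?_
      unfold fP
      split_ifs <;> norm_num
end
end

section
/- For every symmetric menu M on [0,1]^2 with at most 3 items (including the zero item ((0,0),0)), the revenue of M under the uniform distribution on [0,1]^2 is at most 2*sqrt(6)/9, and this bound is attained by the menu {((0,0),0), ((1,1),sqrt(2/3))} that sells the bundle of the two items at price sqrt(2/3) = sqrt(6)/3. -/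
open MeasureTheory Real

noncomputable section

/-- A menu is symmetric if it is closed under swapping the two coordinates of
the allocation. -/
def SymmetricMenu (M : Finset ((ℝ × ℝ) × ℝ)) : Prop :=
  ∀ it ∈ M, ((it.1.2, it.1.1), it.2) ∈ M

/-- Threshold payment. -/
def ind (a p : ℝ) (v : ℝ × ℝ) : ℝ := if p ≤ a * (v.1 + v.2) then p else 0

lemma ind_meas (a p : ℝ) : Measurable (ind a p) := by
  unfold ind
  refine Measurable.ite ?_ measurable_const measurable_const
  exact measurableSet_le measurable_const (by fun_prop)

lemma ind_bdd (a p : ℝ) (v : ℝ × ℝ) : ‖ind a p v‖ ≤ |p| := by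
  unfold ind
  split_ifs <;> simp

lemma ind_int (a p : ℝ) :
    IntegrableOn (ind a p) (Set.Icc ((0 : ℝ), (0 : ℝ)) ((1 : ℝ), (1 : ℝ))) := by
  apply Measure.integrableOn_of_bounded (M := |p|)
  · exact isCompact_Icc.measure_lt_top.ne
  · exact (ind_meas a p).aestronglyMeasurable
  · exact Filter.Eventually.of_forall (ind_bdd a p)

lemma ind_nonneg (a p : ℝ) (hp : 0 ≤ p) (v : ℝ × ℝ) : 0 ≤ ind a p v := by
  unfold ind
  split_ifs <;> simp [hp]

lemma inner_eq (s x : ℝ) :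
    ∫ y in Set.Icc (0 : ℝ) 1, ind 1 s (x, y) = s * max 0 (1 - max 0 (s - x)) := by
  have h : (fun y => ind 1 s (x, y)) = (Set.Ici (s - x)).indicator (fun _ => s) := by
    funext y
    simp only [ind, Set.indicator, Set.mem_Ici, one_mul, tsub_le_iff_left]
  rw [h, setIntegral_indicator measurableSet_Ici]
  have h2 : Set.Icc (0 : ℝ) 1 ∩ Set.Ici (s - x) = Set.Icc (max 0 (s - x)) 1 := by
    ext y; simp only [Set.mem_inter_iff, Set.mem_Icc, Set.mem_Ici, max_le_iff]; tauto
  rw [h2]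
  simp [Measure.real, ENNReal.toReal_ofReal', max_comm, mul_comm]

lemma ind_fubini (s : ℝ) :
    ∫ v in Set.Icc ((0 : ℝ), (0 : ℝ)) ((1 : ℝ), (1 : ℝ)), ind 1 s v
      = s * ∫ x in (0 : ℝ)..1, max 0 (1 - max 0 (s - x)) := by
  have h := ind_int 1 s
  rw [← Set.Icc_prod_Icc] at h ⊢
  rw [Measure.volume_eq_prod] at h ⊢
  rw [setIntegral_prod _ h]
  simp only [inner_eq]
  rw [integral_const_mul, intervalIntegral.integral_of_le zero_le_one,
    integral_Icc_eq_integral_Ioc]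

lemma ind_small (s : ℝ) (h0 : 0 ≤ s) (h1 : s ≤ 1) :
    ∫ v in Set.Icc ((0 : ℝ), (0 : ℝ)) ((1 : ℝ), (1 : ℝ)), ind 1 s v = s * (1 - s ^ 2 / 2) := by
  rw [ind_fubini]
  have hc : Continuous fun x : ℝ => max 0 (1 - max 0 (s - x)) := by fun_prop
  rw [← intervalIntegral.integral_add_adjacent_intervals (b := s)
    (hc.intervalIntegrable _ _) (hc.intervalIntegrable _ _)]
  have e1 : ∫ x in (0 : ℝ)..s, max 0 (1 - max 0 (s - x)) = ∫ x in (0 : ℝ)..s, ((1 - s) + x) := by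
    apply intervalIntegral.integral_congr
    intro x hx
    rw [Set.uIcc_of_le h0] at hx
    obtain ⟨ha, hb⟩ := hx
    simp only
    rw [max_eq_right (a := 0) (b := s - x) (by linarith), max_eq_right (by linarith)]
    ring
  have e2 : ∫ x in s..1, max 0 (1 - max 0 (s - x)) = ∫ x in s..1, (1 : ℝ) := by
    apply intervalIntegral.integral_congr
    intro x hx
    rw [Set.uIcc_of_le h1] at hx
    obtain ⟨ha, hb⟩ := hx
    simp only
    rw [max_eq_left (a := 0) (b := s - x) (by linarith), max_eq_right (by linarith)]
    ring
  rw [e1, e2, intervalIntegral.integral_add (by simp) (by simp)]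
  simp only [intervalIntegral.integral_const, integral_id, smul_eq_mul]
  ring

lemma ind_large (s : ℝ) (h1 : 1 ≤ s) :
    ∫ v in Set.Icc ((0 : ℝ), (0 : ℝ)) ((1 : ℝ), (1 : ℝ)), ind 1 s v ≤ 1 / 2 := by
  rw [ind_fubini]
  have hc : Continuous fun x : ℝ => max 0 (1 - max 0 (s - x)) := by fun_prop
  have hm : ∫ x in (0 : ℝ)..1, max 0 (1 - max 0 (s - x))
      ≤ ∫ x in (0 : ℝ)..1, max 0 (2 - s) * x := by
    apply intervalIntegral.integral_mono_on zero_le_one (hc.intervalIntegrable _ _)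
      ((by fun_prop : Continuous fun x : ℝ => max 0 (2 - s) * x).intervalIntegrable _ _)
    intro x hx
    obtain ⟨ha, hb⟩ := hx
    rw [max_eq_right (a := 0) (b := s - x) (by linarith)]
    apply max_le (by positivity)
    nlinarith [le_max_right 0 (2 - s)]
  rw [intervalIntegral.integral_const_mul, integral_id] at hm
  have h2 := mul_le_mul_of_nonneg_left hm (by linarith : 0 ≤ s)
  refine h2.trans ?_
  rcases le_total 0 (2 - s) with h | h
  · rw [max_eq_right h]; nlinarith [sq_nonneg (s - 1)]
  · rw [max_eq_left h]; norm_num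

lemma ind_one_le (s : ℝ) (h0 : 0 ≤ s) :
    ∫ v in Set.Icc ((0 : ℝ), (0 : ℝ)) ((1 : ℝ), (1 : ℝ)), ind 1 s v ≤ 2 * Real.sqrt 6 / 9 := by
  have h6 : Real.sqrt 6 ^ 2 = 6 := Real.sq_sqrt (by norm_num)
  have h6p := Real.sqrt_nonneg 6
  rcases le_total s 1 with h | h
  · rw [ind_small s h0 h]
    obtain ⟨r, hr⟩ : ∃ r, r = Real.sqrt 6 / 3 := ⟨_, rfl⟩
    have hr2 : r ^ 2 = 2 / 3 := by rw [hr, div_pow, h6]; norm_num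
    have hr0 : 0 ≤ r := by rw [hr]; positivity
    have e : 2 * Real.sqrt 6 / 9 = 2 / 3 * r := by rw [hr]; ring
    rw [e]
    have key : 0 ≤ (s - r) ^ 2 * (s + 2 * r) := by positivity
    have : (s - r) ^ 2 * (s + 2 * r) = s ^ 3 - 3 * s * r ^ 2 + 2 * r * r ^ 2 := by ring
    rw [this, hr2] at key
    linarith [key, (by ring : s * (1 - s ^ 2 / 2) = s - s ^ 3 / 2)]
  · refine (ind_large s h).trans ?_
    have : (2.4 : ℝ) ≤ Real.sqrt 6 := Real.le_sqrt_of_sq_le (by norm_num)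
    linarith

lemma ind_le (a p : ℝ) (ha : 0 ≤ a) (hp : 0 ≤ p) :
    ∫ v in Set.Icc ((0 : ℝ), (0 : ℝ)) ((1 : ℝ), (1 : ℝ)), ind a p v
      ≤ a * (2 * Real.sqrt 6 / 9) := by
  rcases ha.eq_or_lt with rfl | h
  · have : ind 0 p = fun _ => 0 := by
      funext v
      simp only [ind, zero_mul]
      split_ifs <;> linarith
    rw [this]; simp
  · have : ind a p = fun v => a * ind 1 (p / a) v := by
      funext v
      simp only [ind, one_mul, div_le_iff₀ h, mul_comm a]
      split_ifs
      · field_simp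
      · simp
    rw [this, integral_const_mul]
    exact mul_le_mul_of_nonneg_left (ind_one_le _ (by positivity)) ha

lemma rev_le_of (M : Finset ((ℝ × ℝ) × ℝ)) (hM : IsMenu M) (a b p q : ℝ) (ha : 0 ≤ a)
    (hb : 0 ≤ b) (hab : a + b ≤ 1) (hp : 0 ≤ p) (hq : 0 ≤ q)
    (H : ∀ v : ℝ × ℝ, 0 ≤ v.1 → 0 ≤ v.2 → ∀ it ∈ M, (∀ it' ∈ M, util v it' ≤ util v it) →
      it.2 ≤ ind a p v + ind b q v) :
    rev M ≤ 2 * Real.sqrt 6 / 9 := by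
  have h1 : rev M ≤ ∫ v in Set.Icc ((0 : ℝ), (0 : ℝ)) ((1 : ℝ), (1 : ℝ)),
      (ind a p v + ind b q v) := by
    apply integral_mono_of_nonneg
    · refine Filter.Eventually.of_forall fun v => Real.sSup_nonneg ?_
      rintro _ ⟨it, hit, rfl, -⟩
      exact (hM.2 it hit).2.2
    · exact (ind_int a p).add (ind_int b q)
    · filter_upwards [ae_restrict_mem measurableSet_Icc] with v hv
      apply Real.sSup_le
      · rintro _ ⟨it, hit, rfl, h⟩
        exact H v hv.1.1 hv.1.2 it hit h
      · exact add_nonneg (ind_nonneg a p hp v) (ind_nonneg b q hq v)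
  rw [integral_add (ind_int a p) (ind_int b q)] at h1
  have hB : 0 ≤ 2 * Real.sqrt 6 / 9 := by positivity
  nlinarith [ind_le a p ha hp, ind_le b q hb hq]

lemma le_ind {c a p : ℝ} {v : ℝ × ℝ} (h : p ≤ a * (v.1 + v.2)) (hc : c ≤ p) : c ≤ ind a p v := by
  unfold ind
  rwa [if_pos h]

lemma rev_diag (M : Finset ((ℝ × ℝ) × ℝ)) (hM : IsMenu M) (a b p q : ℝ)
    (hu : ((a, a), p) ∈ M) (hw : ((b, b), q) ∈ M) (hab : a ≤ b)
    (hall : ∀ it ∈ M, it = ((0, 0), 0) ∨ it = ((a, a), p) ∨ it = ((b, b), q)) :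
    rev M ≤ 2 * Real.sqrt 6 / 9 := by
  obtain ⟨⟨ha0, ha1⟩, -, hp⟩ := hM.2 _ hu
  obtain ⟨⟨hb0, hb1⟩, -, hq⟩ := hM.2 _ hw
  simp only at ha0 ha1 hp hb0 hb1 hq
  by_cases hreg : p < q ∧ p * (b - a) ≤ (q - p) * a
  · obtain ⟨hpq, hreg⟩ := hreg
    refine rev_le_of M hM a (b - a) p (q - p) ha0 (by linarith) (by linarith) hp (by linarith) ?_
    intro v hv1 hv2 it hit h
    have n1 := ind_nonneg a p hp v
    have n2 := ind_nonneg (b - a) (q - p) (by linarith) v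
    have h0 := h _ hM.1
    have hu' := h _ hu
    have hw' := h _ hw
    rcases hall it hit with rfl | rfl | rfl
    · simp only; linarith
    · simp only [util] at h0 hu' hw' ⊢
      linarith [le_ind (v := v) (a := a) (p := p) (by linarith) le_rfl]
    · simp only [util] at h0 hu' hw' ⊢
      have hd : q - p ≤ (b - a) * (v.1 + v.2) := by linarith
      have hd0 : 0 < b - a := by
        by_contra hcon
        have : b - a = 0 := by linarith
        rw [this] at hd; linarith
      have : p ≤ a * (v.1 + v.2) := by
        have := mul_le_mul_of_nonneg_right hd ha0
        by_contra! hcon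
        nlinarith
      linarith [le_ind this le_rfl, le_ind hd le_rfl]
  · refine rev_le_of M hM b 0 q 0 hb0 le_rfl (by linarith) hq le_rfl ?_
    intro v hv1 hv2 it hit h
    have n1 := ind_nonneg b q hq v
    have n2 := ind_nonneg 0 0 le_rfl v
    have h0 := h _ hM.1
    have hu' := h _ hu
    have hw' := h _ hw
    rcases hall it hit with rfl | rfl | rfl
    · simp only; linarith
    · simp only [util] at h0 hu' hw' ⊢
      have hd : (b - a) * (v.1 + v.2) ≤ q - p := by linarith
      have hd0 : 0 ≤ (b - a) * (v.1 + v.2) := mul_nonneg (by linarith) (by linarith)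
      have hpa : p ≤ a * (v.1 + v.2) := by linarith
      have hle : p = q := by
        by_contra hne
        have hlt : p < q := lt_of_le_of_ne (by linarith) hne
        apply hreg
        refine ⟨hlt, ?_⟩
        have e1 := mul_le_mul_of_nonneg_right hd ha0
        have e2 := mul_le_mul_of_nonneg_right hpa (by linarith : 0 ≤ b - a)
        linarith
      have : p ≤ ind b q v := le_ind (by linarith) hle.le
      linarith
    · simp only [util] at h0 hu' hw' ⊢
      have : q ≤ ind b q v := le_ind (by linarith) le_rfl
      linarith

lemma rev_off (M : Finset ((ℝ × ℝ) × ℝ)) (hM : IsMenu M) (p : ℝ) (hp : 0 ≤ p)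
    (hall : ∀ it ∈ M, it = ((0, 0), 0) ∨ it.2 = p) :
    rev M ≤ 2 * Real.sqrt 6 / 9 := by
  refine rev_le_of M hM 1 0 p 0 zero_le_one le_rfl (by norm_num) hp le_rfl ?_
  intro v hv1 hv2 it hit h
  have n1 := ind_nonneg 1 p hp v
  have n2 := ind_nonneg 0 0 le_rfl v
  rcases hall it hit with rfl | e
  · simp only; linarith
  · have h0 := h _ hM.1
    obtain ⟨⟨_, h1⟩, ⟨_, h2⟩, -⟩ := hM.2 it hit
    simp only [util] at h0
    have : it.2 ≤ ind 1 p v := by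
      apply le_ind _ e.le
      nlinarith
    linarith

lemma two_items {α : Type*} [DecidableEq α] (M : Finset α) (z : α) (hz : z ∈ M)
    (hc : M.card ≤ 3) : ∃ u ∈ M, ∃ w ∈ M, ∀ it ∈ M, it = z ∨ it = u ∨ it = w := by
  by_cases h1 : ∃ u ∈ M, u ≠ z
  · obtain ⟨u, hu, huz⟩ := h1
    by_cases h2 : ∃ w ∈ M, w ≠ z ∧ w ≠ u
    · obtain ⟨w, hw, hwz, hwu⟩ := h2
      refine ⟨u, hu, w, hw, fun it hit => ?_⟩
      have hsub : ({z, u, w} : Finset α) ⊆ M := by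
        intro x hx
        simp only [Finset.mem_insert, Finset.mem_singleton] at hx
        rcases hx with rfl | rfl | rfl <;> assumption
      have hcard : ({z, u, w} : Finset α).card = 3 :=
        Finset.card_eq_three.2 ⟨z, u, w, huz.symm, hwz.symm, hwu.symm, rfl⟩
      have := Finset.eq_of_subset_of_card_le hsub (by omega)
      rw [← this] at hit
      simpa using hit
    · push Not at h2
      refine ⟨u, hu, u, hu, fun it hit => ?_⟩
      by_cases h : it = z
      · exact Or.inl h
      · exact Or.inr (Or.inl (h2 it hit h))
  · push Not at h1
    exact ⟨z, hz, z, hz, fun it hit => Or.inl (h1 it hit)⟩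

/-- every symmetric menu on `[0,1]²` with at most 3 items has
revenue at most `2√6/9` under the uniform distribution on `[0,1]²`, and this
bound is attained by the menu `{((0,0),0), ((1,1),√(2/3))}`. -/
theorem symmetric_three_menu_revenue_le :
    (∀ M : Finset ((ℝ × ℝ) × ℝ), IsMenu M → SymmetricMenu M → M.card ≤ 3 →
      rev M ≤ 2 * Real.sqrt 6 / 9) ∧
    rev {(((0 : ℝ), (0 : ℝ)), (0 : ℝ)),
         (((1 : ℝ), (1 : ℝ)), Real.sqrt (2 / 3))} = 2 * Real.sqrt 6 / 9 := by
  constructor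
  · intro M hM hS hc
    by_cases hdiag : ∀ it ∈ M, it.1.1 = it.1.2
    · obtain ⟨⟨⟨a, a'⟩, p⟩, hu, ⟨⟨b, b'⟩, q⟩, hw, hall⟩ := two_items M _ hM.1 hc
      have e1 := hdiag _ hu
      have e2 := hdiag _ hw
      simp only at e1 e2
      subst e1 e2
      rcases le_total a b with h | h
      · exact rev_diag M hM a b p q hu hw h hall
      · exact rev_diag M hM b a q p hw hu h
          (fun it hit => (hall it hit).imp_right Or.symm)
    · push Not at hdiag
      obtain ⟨u, hu, hne⟩ := hdiag
      have hsw := hS u hu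
      refine rev_off M hM u.2 (hM.2 u hu).2.2 fun it hit => ?_
      have hsub : ({((0, 0), 0), u, ((u.1.2, u.1.1), u.2)} : Finset ((ℝ × ℝ) × ℝ)) ⊆ M := by
        intro x hx
        simp only [Finset.mem_insert, Finset.mem_singleton] at hx
        rcases hx with rfl | rfl | rfl
        · exact hM.1
        · exact hu
        · exact hsw
      have hcard : ({((0, 0), 0), u, ((u.1.2, u.1.1), u.2)} : Finset ((ℝ × ℝ) × ℝ)).card = 3 := by
        refine Finset.card_eq_three.2 ⟨_, _, _, ?_, ?_, ?_, rfl⟩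
        · rintro rfl; exact hne rfl
        · intro h
          have ha := congrArg (fun x => x.1.1) h
          have hb := congrArg (fun x => x.1.2) h
          simp only at ha hb
          exact hne (hb.symm.trans ha)
        · intro h
          exact hne (congrArg (fun x => x.1.1) h)
      have := Finset.eq_of_subset_of_card_le hsub (by omega)
      rw [← this] at hit
      simp only [Finset.mem_insert, Finset.mem_singleton] at hit
      rcases hit with rfl | rfl | rfl <;> simp
  · obtain ⟨s, hs⟩ : ∃ s, s = Real.sqrt (2 / 3) := ⟨_, rfl⟩
    have hs0 : 0 ≤ s := by rw [hs]; positivity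
    have hs2 : s ^ 2 = 2 / 3 := by rw [hs]; exact Real.sq_sqrt (by norm_num)
    have hs1 : s ≤ 1 := by nlinarith
    have hs6 : Real.sqrt 6 = 3 * s := by
      rw [Real.sqrt_eq_iff_mul_self_eq (by norm_num) (by positivity)]
      nlinarith
    rw [← hs, hs6]
    have hrev : rev {(((0 : ℝ), (0 : ℝ)), (0 : ℝ)), (((1 : ℝ), (1 : ℝ)), s)} =
        ∫ v in Set.Icc ((0 : ℝ), (0 : ℝ)) ((1 : ℝ), (1 : ℝ)), ind 1 s v := by
      unfold rev
      congr 1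
      funext v
      apply IsGreatest.csSup_eq
      simp only [ind, one_mul]
      constructor
      · split_ifs with h
        · exact ⟨((1, 1), s), by simp, rfl, by simpa [util] using h⟩
        · exact ⟨((0, 0), 0), by simp, rfl, by simp [util]; linarith⟩
      · rintro _ ⟨it, hit, rfl, h⟩
        simp only [Finset.mem_insert, Finset.mem_singleton] at hit
        have h0 := h ((0, 0), 0) (by simp)
        rcases hit with rfl | rfl
        · split_ifs <;> simp [hs0]
        · simp only [util] at h0
          rw [if_pos (by linarith)]
    rw [hrev, ind_small s hs0 hs1, hs2]
    ring
end
end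

section
/- For every menu M on [0,1]^2 with at most 2 items (including the zero item ((0,0),0)), the revenue of M under the uniform distribution on [0,1]^2 is at most 2*sqrt(6)/9. -/
open MeasureTheory Real

noncomputable section

lemma aux_sq6 : (9/4 : ℝ) ≤ Real.sqrt 6 := by
  apply Real.le_sqrt_of_sq_le; norm_num

def regA (p : ℝ) : Set (ℝ × ℝ) :=
  Set.Icc ((0 : ℝ), (0 : ℝ)) ((1 : ℝ), (1 : ℝ)) ∩ {v | p ≤ v.1 + v.2}

lemma regA_meas (p : ℝ) : MeasurableSet (regA p) := by
  apply MeasurableSet.inter measurableSet_Icc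
  exact measurableSet_le measurable_const (measurable_fst.add measurable_snd)

lemma vol_sq : volume.real (Set.Icc ((0 : ℝ), (0 : ℝ)) ((1 : ℝ), (1 : ℝ))) = 1 := by
  rw [← Set.Icc_prod_Icc, Measure.volume_eq_prod, measureReal_prod_prod]
  simp

lemma sq_fin : volume (Set.Icc ((0 : ℝ), (0 : ℝ)) ((1 : ℝ), (1 : ℝ))) ≠ ⊤ := by
  exact isCompact_Icc.measure_lt_top.ne

/-- Area of the region plus the area below a graph is at most one. -/
lemma area_le (p c : ℝ) (g : ℝ → ℝ) (hg : Continuous g) (hc0 : 0 ≤ c) (hc : c ≤ 1)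
    (h0 : ∀ x ∈ Set.Ioc 0 c, 0 ≤ g x) (h1 : ∀ x ∈ Set.Ioc 0 c, g x ≤ 1)
    (h2 : ∀ x ∈ Set.Ioc 0 c, g x ≤ p - x) :
    volume.real (regA p) + ∫ x in (0:ℝ)..c, g x ≤ 1 := by
  set T := regionBetween (fun _ => (0:ℝ)) g (Set.Ioc 0 c) with hT
  have hTm : MeasurableSet T :=
    measurableSet_regionBetween measurable_const hg.measurable measurableSet_Ioc
  have hTv : volume.real T = ∫ x in (0:ℝ)..c, g x := by
    rw [intervalIntegral.integral_of_le hc0, measureReal_def, Measure.volume_eq_prod, hT,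
      volume_regionBetween_eq_integral]
    · rw [ENNReal.toReal_ofReal]
      · simp
      · apply setIntegral_nonneg measurableSet_Ioc
        intro x hx
        simpa using h0 x hx
    · exact integrableOn_const (by simp)
    · exact (hg.integrableOn_Icc).mono_set Set.Ioc_subset_Icc_self
    · exact measurableSet_Ioc
    · exact h0
  have hTs : T ⊆ Set.Icc ((0 : ℝ), (0 : ℝ)) ((1 : ℝ), (1 : ℝ)) := by
    rintro ⟨x, y⟩ ⟨hx, hy⟩
    simp only [Set.mem_Ioo] at hy
    have := h1 x hx
    simp only [Set.mem_Icc, Prod.mk_le_mk]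
    simp only [Set.mem_Ioc] at hx
    refine ⟨⟨?_, ?_⟩, ?_, ?_⟩ <;> linarith [hx.1, hx.2]
  have hd : Disjoint (regA p) T := by
    rw [Set.disjoint_left]
    rintro ⟨x, y⟩ ⟨_, hA⟩ ⟨hx, hy⟩
    simp only [Set.mem_Ioo, Set.mem_ofPred_eq] at hy hA hx
    have := h2 x hx
    linarith
  rw [← hTv, ← vol_sq, ← measureReal_union hd hTm
    (ne_top_of_le_ne_top sq_fin (measure_mono Set.inter_subset_left))
    (ne_top_of_le_ne_top sq_fin (measure_mono hTs))]
  exact measureReal_mono (Set.union_subset Set.inter_subset_left hTs) sq_fin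

lemma rev_bound (p : ℝ) (hp : 0 ≤ p) : p * volume.real (regA p) ≤ 2 * Real.sqrt 6 / 9 := by
  have h6 := aux_sq6
  have hs : Real.sqrt 6 ^ 2 = 6 := Real.sq_sqrt (by norm_num)
  rcases le_or_gt p 1 with h1 | h1
  · have := area_le p p (fun x => p - x) (by fun_prop) hp h1
      (fun x hx => by linarith [hx.2]) (fun x hx => by linarith [hx.1]) (fun x hx => le_rfl)
    have hi : ∫ x in (0:ℝ)..p, (p - x) = p^2/2 := by
      rw [intervalIntegral.integral_sub (by simp) (by simp)]
      simp; ring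
    rw [hi] at this
    have hA : volume.real (regA p) ≤ 1 - p^2/2 := by linarith
    have h3 := mul_le_mul_of_nonneg_left hA hp
    generalize Real.sqrt 6 = s at *
    have h4 : 0 ≤ (p - s/3)^2 * (p + 2*s/3) := by positivity
    have h5 : (p - s/3)^2 * (p + 2*s/3) = p^3 - p * s^2/3 + 2 * s^2 * s/27 := by ring
    rw [h5, hs] at h4
    nlinarith
  rcases le_or_gt p 2 with h2 | h2
  · have := area_le p 1 (fun x => min 1 (p - x)) (by fun_prop) zero_le_one le_rfl
      (fun x hx => le_min zero_le_one (by linarith [hx.2])) (fun x hx => min_le_left _ _)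
      (fun x hx => min_le_right _ _)
    have hc : Continuous (fun x : ℝ => min 1 (p - x)) := by fun_prop
    have hi : ∫ x in (0:ℝ)..1, min 1 (p - x) = (p - 1) + (2*p-p^2)/2 := by
      rw [← intervalIntegral.integral_add_adjacent_intervals (b := p - 1)
        (hc.intervalIntegrable _ _) (hc.intervalIntegrable _ _)]
      have e1 : ∫ x in (0:ℝ)..(p-1), min 1 (p - x) = ∫ x in (0:ℝ)..(p-1), (1:ℝ) := by
        apply intervalIntegral.integral_congr
        intro x hx
        rw [Set.uIcc_of_le (by linarith)] at hx
        exact min_eq_left (by linarith [hx.2])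
      have e2 : ∫ x in (p-1)..1, min 1 (p - x) = ∫ x in (p-1)..1, (p - x) := by
        apply intervalIntegral.integral_congr
        intro x hx
        rw [Set.uIcc_of_le (by linarith)] at hx
        exact min_eq_right (by linarith [hx.1])
      rw [e1, e2, intervalIntegral.integral_sub (by simp) (by simp)]
      simp; ring
    rw [hi] at this
    have hA : volume.real (regA p) ≤ (2-p)^2/2 := by linarith
    have h3 := mul_le_mul_of_nonneg_left hA hp
    have h4 : p * (2 - p) ≤ 1 := by nlinarith [sq_nonneg (p-1)]
    have h5 : (p * (2-p)) * (2-p) ≤ 1 * 1 :=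
      mul_le_mul h4 (by linarith) (by linarith) zero_le_one
    nlinarith
  · have : regA p = ∅ := by
      ext ⟨x, y⟩
      simp only [regA, Set.mem_inter_iff, Set.mem_Icc, Prod.mk_le_mk, Set.mem_ofPred_eq,
        Set.mem_empty_iff_false, iff_false]
      rintro ⟨⟨_, h⟩, h'⟩
      linarith [h.1, h.2]
    rw [this]
    simp only [measureReal_empty, mul_zero]
    positivity

/-- every menu on `[0,1]²` with at most 2 items has revenue at
most `2√6/9` under the uniform distribution on `[0,1]²`. -/
theorem two_menu_revenue_le (M : Finset ((ℝ × ℝ) × ℝ))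
    (hM : IsMenu M) (hcard : M.card ≤ 2) :
    rev M ≤ 2 * Real.sqrt 6 / 9 := by
  classical
  obtain ⟨h0, hM⟩ := hM
  obtain ⟨q, hq, hMq⟩ : ∃ q ∈ M, ∀ it ∈ M, it = ((0,0),0) ∨ it = q := by
    by_cases h : ∃ q ∈ M, q ≠ ((0,0),0)
    · obtain ⟨q, hq, hne⟩ := h
      refine ⟨q, hq, fun it hit => ?_⟩
      by_contra! hcon
      have : ({((0,0),0), q, it} : Finset ((ℝ × ℝ) × ℝ)) ⊆ M := by
        intro z hz
        simp only [Finset.mem_insert, Finset.mem_singleton] at hz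
        rcases hz with rfl | rfl | rfl <;> assumption
      have h3 := Finset.card_le_card this
      rw [Finset.card_eq_three.mpr ⟨_, _, _, hne.symm, hcon.1.symm, hcon.2.symm, rfl⟩] at h3
      omega
    · push Not at h
      exact ⟨_, h0, fun it hit => Or.inl (h it hit)⟩
  obtain ⟨⟨a, b⟩, p⟩ := q
  obtain ⟨ha, hb, hp⟩ := hM _ hq
  simp only at ha hb hp
  refine le_trans ?_ (rev_bound p hp)
  have hR : MeasurableSet {v : ℝ × ℝ | p ≤ v.1 + v.2} :=
    measurableSet_le measurable_const (measurable_fst.add measurable_snd)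
  have key : rev M ≤ ∫ v in Set.Icc ((0 : ℝ), (0 : ℝ)) ((1 : ℝ), (1 : ℝ)),
      Set.indicator {v : ℝ × ℝ | p ≤ v.1 + v.2} (fun _ => p) v := by
    unfold rev
    apply integral_mono_of_nonneg
    · refine Filter.Eventually.of_forall fun v => ?_
      apply Real.sSup_nonneg
      rintro x ⟨it, hit, rfl, _⟩
      exact (hM it hit).2.2
    · exact (integrableOn_const sq_fin).indicator hR
    · rw [Filter.EventuallyLE, ae_restrict_iff' measurableSet_Icc]
      refine Filter.Eventually.of_forall fun v hv => ?_
      have hnn : 0 ≤ Set.indicator {v : ℝ × ℝ | p ≤ v.1 + v.2} (fun _ => p) v :=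
        Set.indicator_nonneg (fun _ _ => hp) v
      apply Real.sSup_le _ hnn
      rintro x ⟨it, hit, rfl, hu⟩
      rcases hMq it hit with rfl | rfl
      · exact hnn
      · have h := hu _ h0
        simp only [util] at h
        have hv1 : 0 ≤ v.1 := hv.1.1
        have hv2 : 0 ≤ v.2 := hv.1.2
        rw [Set.indicator_of_mem]
        simp only [Set.mem_ofPred_eq]
        nlinarith [mul_le_mul_of_nonneg_left ha.2 hv1, mul_le_mul_of_nonneg_left hb.2 hv2]
  refine key.trans (le_of_eq ?_)
  rw [setIntegral_indicator hR, setIntegral_const, smul_eq_mul, mul_comm]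
  rfl
end
end

section
/- The menu M = {((0,0),0), ((1,1),sqrt(2/3))}, which posts price sqrt(2/3) for the bundle of both items, has revenue exactly 2*sqrt(6)/9 under the uniform distribution on [0,1]^2. -/
open MeasureTheory Real

noncomputable section

lemma bp_eq (p : ℝ) (hp : 0 < p) (v : ℝ × ℝ) :
    buyerPrice {(((0 : ℝ), (0 : ℝ)), (0 : ℝ)), (((1 : ℝ), (1 : ℝ)), p)} v
      = Set.indicator {v : ℝ × ℝ | p ≤ v.1 + v.2} (fun _ => p) v := by
  unfold buyerPrice
  by_cases h : p ≤ v.1 + v.2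
  · rw [Set.indicator_of_mem (by exact h)]
    apply IsGreatest.csSup_eq
    constructor
    · refine ⟨((1, 1), p), by simp, rfl, ?_⟩
      intro it hit
      simp only [Finset.mem_insert, Finset.mem_singleton] at hit
      rcases hit with rfl | rfl <;> simp [util] <;> linarith
    · rintro q ⟨it, hit, rfl, -⟩
      simp only [Finset.mem_insert, Finset.mem_singleton] at hit
      rcases hit with rfl | rfl
      · exact hp.le
      · exact le_rfl
  · rw [Set.indicator_of_notMem (by exact h)]
    apply IsGreatest.csSup_eq
    push Not at h
    constructor
    · refine ⟨((0, 0), 0), by simp, rfl, ?_⟩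
      intro it hit
      simp only [Finset.mem_insert, Finset.mem_singleton] at hit
      rcases hit with rfl | rfl <;> simp [util] <;> linarith
    · rintro q ⟨it, hit, rfl, hm⟩
      simp only [Finset.mem_insert, Finset.mem_singleton] at hit
      rcases hit with rfl | rfl
      · exact le_rfl
      · have := hm ((0, 0), 0) (by simp)
        simp [util] at this
        linarith

lemma inner_eq_s4 (p x : ℝ) (h1 : p - x ≤ 1) :
    ∫ y in Set.Icc (0:ℝ) 1, Set.indicator {v : ℝ × ℝ | p ≤ v.1 + v.2} (fun _ => p) (x, y)
      = p * (1 - max 0 (p - x)) := by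
  have : ∀ y, Set.indicator {v : ℝ × ℝ | p ≤ v.1 + v.2} (fun _ => p) (x, y)
      = Set.indicator (Set.Ici (p - x)) (fun _ => p) y := by
    intro y
    simp only [Set.indicator, Set.mem_setOf_eq, Set.mem_Ici, sub_le_iff_le_add']
  simp_rw [this]
  rw [setIntegral_indicator measurableSet_Ici]
  have hs : Set.Icc (0:ℝ) 1 ∩ Set.Ici (p - x) = Set.Icc (max 0 (p - x)) 1 := by
    ext y
    simp only [Set.mem_inter_iff, Set.mem_Icc, Set.mem_Ici, max_le_iff]
    tauto
  rw [hs, setIntegral_const, Real.volume_real_Icc_of_le (by simp [h1]), smul_eq_mul]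
  ring

lemma rev_eq (p : ℝ) (hp : 0 < p) (hp1 : p ≤ 1) :
    rev {(((0 : ℝ), (0 : ℝ)), (0 : ℝ)), (((1 : ℝ), (1 : ℝ)), p)} = p * (1 - p ^ 2 / 2) := by
  unfold rev
  simp_rw [bp_eq p hp]
  have hm : MeasurableSet {v : ℝ × ℝ | p ≤ v.1 + v.2} :=
    measurableSet_le measurable_const (measurable_fst.add measurable_snd)
  rw [← Set.Icc_prod_Icc, Measure.volume_eq_prod, setIntegral_prod]
  · rw [setIntegral_congr_fun measurableSet_Icc
      (g := fun x => p * (1 - max 0 (p - x)))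
      (fun x hx => inner_eq_s4 p x (by linarith [hx.1]))]
    rw [integral_Icc_eq_integral_Ioc, ← intervalIntegral.integral_of_le zero_le_one]
    have hc : Continuous fun x : ℝ => p * (1 - max 0 (p - x)) := by fun_prop
    rw [← intervalIntegral.integral_add_adjacent_intervals (b := p)
      (hc.intervalIntegrable _ _) (hc.intervalIntegrable _ _)]
    have e1 : ∫ x in (0:ℝ)..p, p * (1 - max 0 (p - x)) = ∫ x in (0:ℝ)..p, (p * (1 - p) + p * x) := by
      apply intervalIntegral.integral_congr
      intro x hx
      rw [Set.uIcc_of_le hp.le] at hx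
      simp only
      rw [max_eq_right (by linarith [hx.2])]
      ring
    have e2 : ∫ x in p..1, p * (1 - max 0 (p - x)) = ∫ x in p..1, p := by
      apply intervalIntegral.integral_congr
      intro x hx
      rw [Set.uIcc_of_le hp1] at hx
      simp only
      rw [max_eq_left (by linarith [hx.1])]
      ring
    rw [e1, e2, intervalIntegral.integral_add (by simp)
      (Continuous.intervalIntegrable (by fun_prop) _ _),
      intervalIntegral.integral_const_mul, intervalIntegral.integral_const_mul, integral_id]
    simp
    ring
  · have hk : IsCompact (Set.Icc (0:ℝ) 1 ×ˢ Set.Icc (0:ℝ) 1) := isCompact_Icc.prod isCompact_Icc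
    have : IntegrableOn (fun _ : ℝ × ℝ => p) (Set.Icc (0:ℝ) 1 ×ˢ Set.Icc (0:ℝ) 1)
        ((volume : Measure ℝ).prod volume) :=
      continuousOn_const.integrableOn_compact hk
    exact Integrable.indicator this hm

/-- the menu `{((0,0),0), ((1,1),√(2/3))}`, posting price `√(2/3)`
for the bundle, has revenue exactly `2√6/9` under the uniform distribution on
`[0,1]²`. -/
theorem bundle_menu_revenue :
    rev {(((0 : ℝ), (0 : ℝ)), (0 : ℝ)),
         (((1 : ℝ), (1 : ℝ)), Real.sqrt (2 / 3))} = 2 * Real.sqrt 6 / 9 := by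
  rw [rev_eq _ (by positivity) (Real.sqrt_le_one.mpr (by norm_num)), Real.sq_sqrt (by norm_num)]
  have : Real.sqrt (2 / 3) = Real.sqrt 6 / 3 := by
    rw [show (2 / 3 : ℝ) = 6 / 3 ^ 2 by norm_num, Real.sqrt_div (by norm_num),
      Real.sqrt_sq (by norm_num)]
  rw [this]
  ring
end
end

section
/- For any menu M on [0,1]^2 with at most 3 items (including the zero item ((0,0),0)), there exists a menu M' with at most 3 items, containing the zero item and containing an item of the form ((1,1),p) for some p ≥ 0, whose revenue under the uniform distribution on [0,1]^2 is at least that of M. -/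
open MeasureTheory Real

noncomputable section

theorem bp_spec (M : Finset ((ℝ × ℝ) × ℝ)) (hne : M.Nonempty) (v : ℝ × ℝ) :
    (∃ it ∈ M, it.2 = buyerPrice M v ∧ ∀ it' ∈ M, util v it' ≤ util v it) ∧
    (∀ it ∈ M, (∀ it' ∈ M, util v it' ≤ util v it) → it.2 ≤ buyerPrice M v) := by
  have hfin : ({p : ℝ | ∃ it ∈ M, it.2 = p ∧ ∀ it' ∈ M, util v it' ≤ util v it}).Finite := by
    apply (M.image (fun it => it.2)).finite_toSet.subset
    rintro p ⟨it, h, rfl, -⟩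
    simp only [Finset.coe_image]
    exact ⟨it, h, rfl⟩
  have hnon : ({p : ℝ | ∃ it ∈ M, it.2 = p ∧ ∀ it' ∈ M, util v it' ≤ util v it}).Nonempty := by
    obtain ⟨it, h, h'⟩ := M.exists_max_image (util v) hne
    exact ⟨it.2, it, h, rfl, h'⟩
  refine ⟨hnon.csSup_mem hfin, fun it h h' => ?_⟩
  exact le_csSup hfin.bddAbove ⟨it, h, rfl, h'⟩

theorem bp_nonneg (M : Finset ((ℝ × ℝ) × ℝ)) (hM : IsMenu M) (v : ℝ × ℝ) :
    0 ≤ buyerPrice M v := by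
  obtain ⟨⟨it, h, h', -⟩, -⟩ := bp_spec M ⟨_, hM.1⟩ v
  rw [← h']
  exact (hM.2 it h).2.2

theorem bp_meas (M : Finset ((ℝ × ℝ) × ℝ)) (hM : IsMenu M) :
    Measurable (buyerPrice M) := by
  apply measurable_of_Ici
  intro c
  have : buyerPrice M ⁻¹' Set.Ici c =
      ⋃ it ∈ M.filter (fun it => c ≤ it.2), ⋂ it' ∈ M, {v | util v it' ≤ util v it} := by
    ext v
    obtain ⟨⟨it, h, h', h''⟩, h2⟩ := bp_spec M ⟨_, hM.1⟩ v
    simp only [Set.mem_preimage, Set.mem_Ici, Set.mem_iUnion, Set.mem_iInter, Set.mem_ofPred_eq,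
      Finset.mem_filter, exists_prop]
    constructor
    · intro hc
      exact ⟨it, ⟨h, h' ▸ hc⟩, h''⟩
    · rintro ⟨j, ⟨hj, hc⟩, hj'⟩
      exact hc.trans (h2 j hj hj')
  rw [this]
  apply Finset.measurableSet_biUnion
  intro it _
  apply Finset.measurableSet_biInter
  intro it' _
  apply measurableSet_le <;> unfold util <;> fun_prop

theorem rev_mono (M M' : Finset ((ℝ × ℝ) × ℝ)) (hM : IsMenu M) (hM' : IsMenu M')
    (h : ∀ v : ℝ × ℝ, 0 ≤ v.1 → 0 ≤ v.2 → buyerPrice M v ≤ buyerPrice M' v) :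
    rev M ≤ rev M' := by
  unfold rev
  apply integral_mono_of_nonneg
  · exact Filter.Eventually.of_forall (bp_nonneg M hM)
  · obtain ⟨B, -, hB⟩ := M'.exists_max_image (fun it => it.2) ⟨_, hM'.1⟩
    have hfin : volume (Set.Icc ((0 : ℝ), (0 : ℝ)) ((1 : ℝ), (1 : ℝ))) ≠ ⊤ :=
      isCompact_Icc.measure_lt_top.ne
    apply Measure.integrableOn_of_bounded (M := B.2) hfin (bp_meas M' hM').aestronglyMeasurable
    refine Filter.Eventually.of_forall fun v => ?_
    rw [Real.norm_of_nonneg (bp_nonneg M' hM' v)]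
    obtain ⟨⟨it, h, h', -⟩, -⟩ := bp_spec M' ⟨_, hM'.1⟩ v
    rw [← h']
    exact hB it h
  · filter_upwards [ae_restrict_mem measurableSet_Icc] with v hv
    exact h v hv.1.1 hv.1.2

/-- for any menu with at most 3 items there is a menu with at most
3 items containing the full-bundle allocation `(1,1)` whose revenue is at least
as large. -/
theorem exists_bundling_three_menu (M : Finset ((ℝ × ℝ) × ℝ))
    (hM : IsMenu M) (hcard : M.card ≤ 3) :
    ∃ M' : Finset ((ℝ × ℝ) × ℝ), IsMenu M' ∧ M'.card ≤ 3 ∧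
      (∃ p : ℝ, 0 ≤ p ∧ (((1 : ℝ), (1 : ℝ)), p) ∈ M') ∧
      rev M ≤ rev M' := by
  classical
  obtain ⟨B, hBM, hB⟩ := M.exists_max_image (fun it => it.2) ⟨_, hM.1⟩
  have hB0 := hM.2 B hBM
  by_cases hz : B = (((0 : ℝ), (0 : ℝ)), (0 : ℝ))
  · have hM' : IsMenu {(((0 : ℝ), (0 : ℝ)), (0 : ℝ)), (((1 : ℝ), (1 : ℝ)), (0 : ℝ))} := by
      refine ⟨by simp, ?_⟩
      intro it hit
      simp only [Finset.mem_insert, Finset.mem_singleton] at hit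
      rcases hit with rfl | rfl <;> simp
    refine ⟨_, hM', Finset.card_le_two.trans (by norm_num), ⟨0, le_rfl, by simp⟩, ?_⟩
    apply rev_mono _ _ hM hM'
    intro v _ _
    obtain ⟨⟨it, h, h', -⟩, -⟩ := bp_spec M ⟨_, hM.1⟩ v
    rw [← h']
    refine (hB it h).trans ?_
    rw [hz]
    exact bp_nonneg _ hM' v
  · have hM' : IsMenu (insert (((1 : ℝ), (1 : ℝ)), B.2) (M.erase B)) := by
      refine ⟨Finset.mem_insert_of_mem (Finset.mem_erase.2 ⟨Ne.symm hz, hM.1⟩), ?_⟩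
      intro it hit
      rcases Finset.mem_insert.1 hit with rfl | hit
      · simp [hB0.2.2]
      · exact hM.2 it (Finset.mem_of_mem_erase hit)
    refine ⟨_, hM', ?_, ⟨B.2, hB0.2.2, Finset.mem_insert_self _ _⟩, ?_⟩
    · have h1 := Finset.card_insert_le (((1 : ℝ), (1 : ℝ)), B.2) (M.erase B)
      have h2 := Finset.card_erase_add_one hBM
      omega
    apply rev_mono _ _ hM hM'
    intro v hv1 hv2
    have hBB : util v B ≤ util v (((1 : ℝ), (1 : ℝ)), B.2) := by
      unfold util
      have := mul_le_mul_of_nonneg_left hB0.1.2 hv1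
      have := mul_le_mul_of_nonneg_left hB0.2.1.2 hv2
      simp only
      linarith
    obtain ⟨⟨it, h, h', hmax⟩, -⟩ := bp_spec M ⟨_, hM.1⟩ v
    obtain ⟨-, hs⟩ := bp_spec _ ⟨_, hM'.1⟩ v
    rw [← h']
    by_cases hc : util v it ≤ util v (((1 : ℝ), (1 : ℝ)), B.2)
    · refine (hB it h).trans (hs (((1 : ℝ), (1 : ℝ)), B.2) (Finset.mem_insert_self _ _) ?_)
      intro j hj
      rcases Finset.mem_insert.1 hj with rfl | hj
      · exact le_rfl
      · exact (hmax j (Finset.mem_of_mem_erase hj)).trans hc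
    · push Not at hc
      refine hs it (Finset.mem_insert_of_mem (Finset.mem_erase.2 ⟨?_, h⟩)) ?_
      · rintro rfl
        exact absurd hBB (not_le.2 hc)
      · intro j hj
        rcases Finset.mem_insert.1 hj with rfl | hj
        · exact hc.le
        · exact hmax j (Finset.mem_of_mem_erase hj)
end
end

section
/- Let 0 ≤ q < p ≤ 1 and δ ∈ [0,1) satisfy (p − q)/(1 − δ) < 1 and (q − δ*p)/(1 − δ) < 1. Then the menu M = {((0,0),0), ((1,1),p), ((1,δ),q)} has revenue at most 59/108 under the uniform distribution on [0,1]^2, with equality exactly when δ = 0, q = 2/3 and p = 5/6. -/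
open MeasureTheory Real

noncomputable section

theorem aux_price (p q δ a x y : ℝ) (hq0 : 0 ≤ q) (hqp : q < p) (hδ1 : δ < 1)
    (ha : a = (p - q) / (1 - δ)) :
    buyerPrice {(((0 : ℝ), (0 : ℝ)), (0 : ℝ)), (((1 : ℝ), (1 : ℝ)), p), (((1 : ℝ), δ), q)} (x, y)
      = if a ≤ y then (if p - y ≤ x then p else 0) else (if q - δ * y ≤ x then q else 0) := by
  have h1 : (a ≤ y) ↔ p - q ≤ y * (1 - δ) := by
    rw [ha, div_le_iff₀ (by linarith)]
  have hg : ∀ r : ℝ, IsGreatest {s : ℝ | ∃ it ∈ ({(((0 : ℝ), (0 : ℝ)), (0 : ℝ)), (((1 : ℝ), (1 : ℝ)), p), (((1 : ℝ), δ), q)} : Finset ((ℝ × ℝ) × ℝ)), it.2 = s ∧ ∀ it' ∈ ({(((0 : ℝ), (0 : ℝ)), (0 : ℝ)), (((1 : ℝ), (1 : ℝ)), p), (((1 : ℝ), δ), q)} : Finset ((ℝ × ℝ) × ℝ)), util (x, y) it' ≤ util (x, y) it} r →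
     buyerPrice {(((0 : ℝ), (0 : ℝ)), (0 : ℝ)), (((1 : ℝ), (1 : ℝ)), p), (((1 : ℝ), δ), q)} (x, y) = r := fun r h => h.csSup_eq
  apply hg
  simp only [IsGreatest, upperBounds, Finset.mem_insert, Finset.mem_singleton, Set.mem_ofPred_eq,
    exists_eq_or_imp, forall_eq_or_imp, exists_eq_left, forall_eq, util]
  simp only [h1]
  split_ifs with h2 h3 h3
  · refine ⟨Or.inr (Or.inl ⟨rfl, ?_, ?_, ?_⟩), ?_⟩
    · linarith
    · linarith
    · linarith
    · rintro s (⟨rfl, h⟩ | ⟨rfl, h⟩ | ⟨rfl, h⟩) <;> linarith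
  · refine ⟨Or.inl ⟨rfl, ?_, ?_, ?_⟩, ?_⟩
    · linarith
    · linarith
    · linarith
    · rintro s (⟨rfl, h⟩ | ⟨rfl, h⟩ | ⟨rfl, h⟩) <;> linarith
  · refine ⟨Or.inr (Or.inr ⟨rfl, ?_, ?_, ?_⟩), ?_⟩
    · linarith
    · linarith
    · linarith
    · rintro s (⟨rfl, h⟩ | ⟨rfl, h⟩ | ⟨rfl, h⟩) <;> linarith
  · refine ⟨Or.inl ⟨rfl, ?_, ?_, ?_⟩, ?_⟩
    · linarith
    · linarith
    · linarith
    · rintro s (⟨rfl, h⟩ | ⟨rfl, h⟩ | ⟨rfl, h⟩) <;> linarith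

theorem aux_inner (c r : ℝ) (hc : c ≤ 1) :
    ∫ x in Set.Icc (0 : ℝ) 1, (if c ≤ x then r else 0) = r * (1 - max 0 c) := by
  have : (fun x : ℝ => if c ≤ x then r else 0) = (Set.Ici c).indicator (fun _ => r) := by
    funext x; simp [Set.indicator]
  rw [this, setIntegral_indicator measurableSet_Ici]
  have h2 : Set.Icc (0 : ℝ) 1 ∩ Set.Ici c = Set.Icc (max 0 c) 1 := by
    ext x; simp; tauto
  rw [h2, setIntegral_const]
  have : max 0 c ≤ 1 := by simp [hc]
  rw [Measure.real, Real.volume_Icc, ENNReal.toReal_ofReal (by linarith)]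
  simp [mul_comm]

theorem aux_rev (p q δ a : ℝ) (hq0 : 0 ≤ q) (hqp : q < p) (hp1 : p ≤ 1)
    (hδ0 : 0 ≤ δ) (hδ1 : δ < 1)
    (ha : a = (p - q) / (1 - δ)) (ha1 : a < 1) :
    rev {(((0 : ℝ), (0 : ℝ)), (0 : ℝ)), (((1 : ℝ), (1 : ℝ)), p), (((1 : ℝ), δ), q)}
      = p * (∫ y in a..1, (1 - max 0 (p - y))) + q * ∫ y in (0 : ℝ)..a, (1 - max 0 (q - δ * y)) := by
  have ha0 : 0 < a := by rw [ha]; apply div_pos <;> linarith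
  unfold rev
  have hF : ∀ v : ℝ × ℝ, buyerPrice {(((0 : ℝ), (0 : ℝ)), (0 : ℝ)), (((1 : ℝ), (1 : ℝ)), p), (((1 : ℝ), δ), q)} v
      = if a ≤ v.2 then (if p - v.2 ≤ v.1 then p else 0) else (if q - δ * v.2 ≤ v.1 then q else 0) :=
    fun v => aux_price p q δ a v.1 v.2 hq0 hqp hδ1 ha
  simp_rw [hF]
  rw [← Set.Icc_prod_Icc, Measure.volume_eq_prod, ← Measure.prod_restrict]
  rw [integral_prod_symm]
  · have hin : ∀ y ∈ Set.Icc (0 : ℝ) 1, (∫ x in Set.Icc (0 : ℝ) 1, (if a ≤ y then (if p - y ≤ x then p else 0) else (if q - δ * y ≤ x then q else 0)))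
        = if a ≤ y then p * (1 - max 0 (p - y)) else q * (1 - max 0 (q - δ * y)) := by
      intro y hy
      have : 0 ≤ δ * y := mul_nonneg hδ0 hy.1
      split_ifs
      · exact aux_inner _ _ (by linarith [hy.1])
      · exact aux_inner _ _ (by linarith)
    rw [setIntegral_congr_fun measurableSet_Icc hin]
    rw [integral_Icc_eq_integral_Ioc, ← intervalIntegral.integral_of_le zero_le_one]
    have e1 : Set.EqOn (fun y => q * (1 - max 0 (q - δ * y))) (fun y => if a ≤ y then p * (1 - max 0 (p - y)) else q * (1 - max 0 (q - δ * y))) (Set.Ioo 0 a) := by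
      intro y hy
      simp [not_le.2 hy.2]
    have e2 : Set.EqOn (fun y => p * (1 - max 0 (p - y))) (fun y => if a ≤ y then p * (1 - max 0 (p - y)) else q * (1 - max 0 (q - δ * y))) (Set.Ioo a 1) := by
      intro y hy
      simp [hy.1.le]
    have i1 : IntervalIntegrable (fun y => q * (1 - max 0 (q - δ * y))) volume 0 a :=
      Continuous.intervalIntegrable (by fun_prop) _ _
    have i2 : IntervalIntegrable (fun y => p * (1 - max 0 (p - y))) volume a 1 :=
      Continuous.intervalIntegrable (by fun_prop) _ _
    have j1 := i1.congr_uIoo (by rwa [Set.uIoo_of_le ha0.le])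
    have j2 := i2.congr_uIoo (by rwa [Set.uIoo_of_le ha1.le])
    rw [← intervalIntegral.integral_add_adjacent_intervals j1 j2,
      ← intervalIntegral.integral_congr_Ioo_of_le ha0.le e1, ← intervalIntegral.integral_congr_Ioo_of_le ha1.le e2,
      intervalIntegral.integral_const_mul, intervalIntegral.integral_const_mul, add_comm]
  · rw [Measure.prod_restrict]
    apply Measure.integrableOn_of_bounded (M := p)
    · rw [← Measure.volume_eq_prod, Set.Icc_prod_Icc]
      exact isCompact_Icc.measure_lt_top.ne
    · apply Measurable.aestronglyMeasurable
      refine Measurable.ite (measurableSet_le (by fun_prop) (by fun_prop)) ?_ ?_ <;>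
      exact Measurable.ite (measurableSet_le (by fun_prop) (by fun_prop)) (by fun_prop) (by fun_prop)
    · refine Filter.Eventually.of_forall fun v => ?_
      rw [Real.norm_eq_abs, abs_le]
      split_ifs <;> constructor <;> linarith

theorem aux_lin (c d s t : ℝ) : ∫ y in s..t, (1 - (c - d * y)) = (t - s) * (1 - c) + d * (t ^ 2 - s ^ 2) / 2 := by
  have : ∀ y : ℝ, 1 - (c - d * y) = (1 - c) + d * y := fun y => by ring
  simp_rw [this]
  rw [intervalIntegral.integral_add (by simp) (Continuous.intervalIntegrable (by fun_prop) _ _),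
    intervalIntegral.integral_const_mul, integral_id]
  simp
  ring

/-- A linear ramp which hits zero at `m`. -/
theorem aux_ramp (c d s m t : ℝ) (hd : 0 ≤ d) (hs : s ≤ m) (ht : m ≤ t) (hm : d * m = c) :
    ∫ y in s..t, (1 - max 0 (c - d * y)) = (m - s) * (1 - c) + d * (m ^ 2 - s ^ 2) / 2 + (t - m) := by
  rw [← intervalIntegral.integral_add_adjacent_intervals (b := m)
    (Continuous.intervalIntegrable (by fun_prop) _ _) (Continuous.intervalIntegrable (by fun_prop) _ _),
    ← aux_lin]
  congr 1
  · apply intervalIntegral.integral_congr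
    intro y hy
    rw [Set.uIcc_of_le hs] at hy
    have : d * y ≤ d * m := mul_le_mul_of_nonneg_left hy.2 hd
    simp only
    rw [max_eq_right (by linarith)]
  · have : Set.EqOn (fun y => 1 - max 0 (c - d * y)) (fun _ => (1 : ℝ)) (Set.uIcc m t) := by
      intro y hy
      rw [Set.uIcc_of_le ht] at hy
      have : d * m ≤ d * y := mul_le_mul_of_nonneg_left hy.1 hd
      simp only
      rw [max_eq_left (by linarith)]
      simp
    rw [intervalIntegral.integral_congr this]
    simp

theorem aux_ramp_pos (c d s t : ℝ) (hd : 0 ≤ d) (hs : s ≤ t) (hm : d * t ≤ c) :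
    ∫ y in s..t, (1 - max 0 (c - d * y)) = (t - s) * (1 - c) + d * (t ^ 2 - s ^ 2) / 2 := by
  rw [← aux_lin]
  apply intervalIntegral.integral_congr
  intro y hy
  rw [Set.uIcc_of_le hs] at hy
  have : d * y ≤ d * t := mul_le_mul_of_nonneg_left hy.2 hd
  simp only
  rw [max_eq_right (by linarith)]

theorem aux_ramp_zero (c s t : ℝ) (hs : s ≤ t) (hm : c ≤ s) :
    ∫ y in s..t, (1 - max 0 (c - y)) = t - s := by
  have : Set.EqOn (fun y => 1 - max 0 (c - y)) (fun _ => (1 : ℝ)) (Set.uIcc s t) := by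
    intro y hy
    rw [Set.uIcc_of_le hs] at hy
    simp only
    rw [max_eq_left (by linarith [hy.1])]
    simp
  rw [intervalIntegral.integral_congr this]
  simp

theorem aux_cubic (p : ℝ) (hp : 0 ≤ p) (hp1 : p ≤ 1) : p - p ^ 3 / 2 < 59 / 108 := by
  nlinarith [mul_nonneg hp (sq_nonneg (p - 0.8165)), sq_nonneg (p - 0.8165)]

/-- Revenue in the main case, with `p = a + b`, `q = b + δ a`. -/
theorem aux_main (a b δ R : ℝ) (ha : 0 < a) (hb : 0 ≤ b) (hp : a + b ≤ 1) (hδ0 : 0 ≤ δ) (hδ1 : δ < 1)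
    (hR : R = (a - a ^ 2 + b - b ^ 3 / 2 - 3 / 2 * a * b ^ 2) + a ^ 2 * (1 - 3 * b / 2) * δ - δ ^ 2 * a ^ 3 / 2) :
    R ≤ 59 / 108 ∧ (R = 59 / 108 → δ = 0 ∧ b = 2 / 3 ∧ a = 1 / 6) := by
  by_cases h : 2 / 3 ≤ b
  · have e : R = 59 / 108 - ((a - 1 / 6) + (b - 2 / 3)) ^ 2 - (b - 2 / 3) ^ 2 * ((b - 2 / 3) / 2 + 3 / 2 * a)
        - a ^ 2 * (3 / 2 * (b - 2 / 3)) * δ - a ^ 3 / 2 * δ ^ 2 := by rw [hR]; ring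
    have t1 := sq_nonneg ((a - 1 / 6) + (b - 2 / 3))
    have t2' : 0 < (b - 2 / 3) / 2 + 3 / 2 * a := by linarith
    have t2 := mul_nonneg (sq_nonneg (b - 2 / 3)) t2'.le
    have t3 : 0 ≤ a ^ 2 * (3 / 2 * (b - 2 / 3)) * δ :=
      mul_nonneg (mul_nonneg (sq_nonneg a) (by linarith)) hδ0
    have t4' : 0 < a ^ 3 / 2 := by positivity
    have t4 := mul_nonneg t4'.le (sq_nonneg δ)
    refine ⟨by linarith, fun hE => ?_⟩
    have z4 : a ^ 3 / 2 * δ ^ 2 = 0 := by linarith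
    have z2 : (b - 2 / 3) ^ 2 * ((b - 2 / 3) / 2 + 3 / 2 * a) = 0 := by linarith
    have z1 : ((a - 1 / 6) + (b - 2 / 3)) ^ 2 = 0 := by linarith
    have hd : δ = 0 := by
      rcases mul_eq_zero.1 z4 with h | h
      · exact absurd h t4'.ne'
      · exact pow_eq_zero_iff two_ne_zero |>.1 h
    have hb : b - 2 / 3 = 0 := by
      rcases mul_eq_zero.1 z2 with h | h
      · exact pow_eq_zero_iff two_ne_zero |>.1 h
      · exact absurd h t2'.ne'
    have := pow_eq_zero_iff two_ne_zero |>.1 z1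
    exact ⟨hd, by linarith, by linarith⟩
  · push Not at h
    suffices R < 59 / 108 from ⟨this.le, fun h => absurd h this.ne⟩
    by_cases h2 : 1 - 3 * b / 2 ≤ a
    · have e : R = 59 / 108 - ((a - 1 / 6) + (b - 2 / 3)) ^ 2 - (b - 2 / 3) ^ 2 * ((b - 2 / 3) / 2 + 3 / 8 * a)
        - a / 2 * (a * δ - (1 - 3 * b / 2)) ^ 2 := by rw [hR]; ring
      have t1 := sq_nonneg ((a - 1 / 6) + (b - 2 / 3))
      have t2' : 0 < (b - 2 / 3) / 2 + 3 / 8 * a := by linarith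
      have t2 : 0 < (b - 2 / 3) ^ 2 * ((b - 2 / 3) / 2 + 3 / 8 * a) :=
        mul_pos (sq_pos_of_neg (by linarith)) t2'
      have t4 := mul_nonneg (half_pos ha).le (sq_nonneg (a * δ - (1 - 3 * b / 2)))
      linarith
    · push Not at h2
      have e : R = (a + b) - (a + b) ^ 3 / 2 - a ^ 2 * (1 - δ) * ((1 - 3 * b / 2) - (1 + δ) * a / 2) := by
        rw [hR]; ring
      have hc := aux_cubic (a + b) (by linarith) hp
      have : 0 ≤ a ^ 2 * (1 - δ) * ((1 - 3 * b / 2) - (1 + δ) * a / 2) := by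
        apply mul_nonneg (mul_nonneg (sq_nonneg a) (by linarith))
        nlinarith
      linarith

theorem aux_neg (p q δ a : ℝ) (hq0 : 0 ≤ q) (hqp : q < p) (hp1 : p ≤ 1) (hδ : 0 < δ)
    (hδ1 : δ < 1) (hpa : p < a) (hrel : p - q = a * (1 - δ)) :
    p * (1 - a) + q * (a - q ^ 2 / (2 * δ)) < 59 / 108 := by
  have ha : 0 < a := by linarith
  have hda : δ * a = a - p + q := by linarith
  have key : p * (1 - a) + q * (a - q ^ 2 / (2 * δ)) = (p - p ^ 2 + p * q - p * q ^ 2 / 2)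
      - (p - q) * (a - p) * (1 - q ^ 2 / (2 * (a * δ))) := by
    have hq : q = p - a * (1 - δ) := by linarith
    field_simp
    rw [hq]
    ring
  have h1 : q ^ 2 / (2 * (a * δ)) ≤ 1 := by
    rw [div_le_one (by positivity)]
    nlinarith
  have h2 : 0 ≤ (p - q) * (a - p) * (1 - q ^ 2 / (2 * (a * δ))) :=
    mul_nonneg (mul_nonneg (by linarith) (by linarith)) (by linarith)
  have h3 := aux_cubic p (by linarith) hp1
  have h4 : p * q - p * q ^ 2 / 2 ≤ p ^ 2 - p ^ 3 / 2 := by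
    have : 0 ≤ p * ((p - q) * (1 - (p + q) / 2)) :=
      mul_nonneg (by linarith) (mul_nonneg (by linarith) (by linarith))
    nlinarith
  linarith

/-- Case 1: for `0 ≤ q < p ≤ 1` and `δ ∈ [0,1)` with
`(p-q)/(1-δ) < 1` and `(q-δp)/(1-δ) < 1`, the menu
`{((0,0),0), ((1,1),p), ((1,δ),q)}` has revenue at most `59/108`, with
equality exactly when `δ = 0`, `q = 2/3` and `p = 5/6`. -/
theorem case1_three_menu (p q δ : ℝ)
    (hq0 : 0 ≤ q) (hqp : q < p) (hp1 : p ≤ 1)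
    (hδ0 : 0 ≤ δ) (hδ1 : δ < 1)
    (hA : (p - q) / (1 - δ) < 1)
    (hB : (q - δ * p) / (1 - δ) < 1) :
    rev {(((0 : ℝ), (0 : ℝ)), (0 : ℝ)),
         (((1 : ℝ), (1 : ℝ)), p),
         (((1 : ℝ), δ), q)} ≤ 59 / 108 ∧
    (rev {(((0 : ℝ), (0 : ℝ)), (0 : ℝ)),
          (((1 : ℝ), (1 : ℝ)), p),
          (((1 : ℝ), δ), q)} = 59 / 108 ↔ δ = 0 ∧ q = 2 / 3 ∧ p = 5 / 6) := by
  obtain ⟨a, ha⟩ : ∃ a, a = (p - q) / (1 - δ) := ⟨_, rfl⟩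
  have ha1 : a < 1 := ha ▸ hA
  have ha0 : 0 < a := by rw [ha]; apply div_pos <;> linarith
  have hrel : p - q = a * (1 - δ) := by
    rw [ha, div_mul_cancel₀]; linarith
  rw [aux_rev p q δ a hq0 hqp hp1 hδ0 hδ1 ha ha1]
  by_cases hb : a ≤ p
  · have i1 := aux_ramp p 1 a p 1 zero_le_one hb hp1 (one_mul p)
    have i2 := aux_ramp_pos q δ 0 a hδ0 ha0.le (by nlinarith)
    simp only [one_mul] at i1
    rw [i1, i2]
    have hq : q = p - a * (1 - δ) := by linarith
    obtain ⟨h1, h2⟩ := aux_main a (p - a) δ _ ha0 (by linarith) (by linarith) hδ0 hδ1 rfl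
    have e : p * ((p - a) * (1 - p) + (p ^ 2 - a ^ 2) / 2 + (1 - p)) +
        q * ((a - 0) * (1 - q) + δ * (a ^ 2 - 0 ^ 2) / 2) = (a - a ^ 2 + (p - a) - (p - a) ^ 3 / 2 - 3 / 2 * a * (p - a) ^ 2) + a ^ 2 * (1 - 3 * (p - a) / 2) * δ - δ ^ 2 * a ^ 3 / 2 := by
      rw [hq]; ring
    rw [e]
    refine ⟨h1, fun h => ?_, ?_⟩
    · obtain ⟨h3, h4, h5⟩ := h2 h
      subst h3
      refine ⟨rfl, by linarith, by linarith⟩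
    · rintro ⟨rfl, rfl, rfl⟩
      have : a = 1 / 6 := by linarith
      rw [this]; norm_num
  · push Not at hb
    have hδ : 0 < δ := by
      by_contra h
      have : δ = 0 := by linarith
      subst this
      linarith
    have i2 := aux_ramp q δ 0 (q / δ) a hδ0 (by positivity)
      (by rw [div_le_iff₀ hδ]; linarith) (by field_simp)
    rw [aux_ramp_zero p a 1 ha1.le hb.le, i2]
    have e : (q / δ - 0) * (1 - q) + δ * ((q / δ) ^ 2 - 0 ^ 2) / 2 + (a - q / δ) = a - q ^ 2 / (2 * δ) := by
      field_simp; ring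
    rw [e]
    have := aux_neg p q δ a hq0 hqp hp1 hδ hδ1 hb hrel
    refine ⟨this.le, fun h => absurd h this.ne, ?_⟩
    rintro ⟨rfl, _, _⟩
    exact absurd hδ (lt_irrefl _)
end
end

section
/- Let p ≥ 1 > q ≥ 0 with q < p and δ ∈ [0,1) satisfy (p − q)/(1 − δ) < 1 and (q − δ*p)/(1 − δ) < 1. Then the menu M = {((0,0),0), ((1,1),p), ((1,δ),q)} has revenue at most 14/27 under the uniform distribution on [0,1]^2. -/
open MeasureTheory Real

noncomputable section

theorem poly_bound (a e t : ℝ) (ha : a ≤ 1) (ht : 0 ≤ t) (hte : t < e) (hea : e ≤ a) :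
    a * (1 + t - e) * (a + e - 2 * t) + (1 + t) * (1 - a) * (1 + a - 2 * t) ≤ 28 / 27 := by
  have key : a * (1 + t - e) * (a + e - 2 * t) + (1 + t) * (1 - a) * (1 + a - 2 * t)
      = 1 + (a * e) * (1 - a - e) + (3 * (a * e) - 1) * t - 2 * t ^ 2 := by ring
  rw [key]
  have he : 0 < e := by linarith
  have ha0 : 0 < a := by linarith
  have hs : 0 < a * e := by positivity
  have h4 : 4 * (a * e) ≤ (a + e) ^ 2 := by nlinarith [sq_nonneg (a - e)]
  have hs1 : a * e ≤ 1 := by nlinarith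
  by_cases h : 3 * (a * e) ≤ 1
  · have h1 : (a * e) * (1 - a - e) ≤ 1 / 27 := by
      by_cases hu : a + e ≤ 1
      · have : 4 * (a * e) * (1 - (a + e)) ≤ (a + e) ^ 2 * (1 - (a + e)) :=
          mul_le_mul_of_nonneg_right h4 (by linarith)
        have h5 : 0 ≤ (a + e - 2 / 3) ^ 2 * (a + e + 1 / 3) := by positivity
        nlinarith
      · nlinarith
    nlinarith [mul_nonneg ht (sub_nonneg.2 h), sq_nonneg t]
  · push Not at h
    set s := a * e with hsdef
    have hr : 0 ≤ √s := Real.sqrt_nonneg s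
    have hrs : √s ^ 2 = s := Real.sq_sqrt hs.le
    have hr1 : √s ≤ 1 := by nlinarith
    have hr2 : 1 / 2 ≤ √s := by nlinarith
    have hu : 2 * √s ≤ a + e := by
      refine abs_le_of_sq_le_sq' (a := 2 * √s) (b := a + e) (by nlinarith) (by linarith) |>.2
    have hc : (4 * s - 1) / 3 ≤ a + e - 1 := by
      nlinarith [mul_nonneg (sub_nonneg.2 hr1) (sub_nonneg.2 hr2)]
    have h6 : s * ((4 * s - 1) / 3) ≤ s * (a + e - 1) := mul_le_mul_of_nonneg_left hc hs.le
    nlinarith [sq_nonneg (4 * t - (3 * s - 1))]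

def gfun (p q δ a : ℝ) (v : ℝ × ℝ) : ℝ :=
  if v.2 < a then (if q - δ * v.2 ≤ v.1 then q else 0) else (if p - v.2 ≤ v.1 then p else 0)

theorem price_eq (p q δ a : ℝ) (hq0 : 0 ≤ q) (hqp : q < p) (hδ1 : δ < 1)
    (ha : a * (1 - δ) = p - q) (v : ℝ × ℝ) :
    buyerPrice {(((0 : ℝ), (0 : ℝ)), (0 : ℝ)), (((1 : ℝ), (1 : ℝ)), p), (((1 : ℝ), δ), q)} v
      = gfun p q δ a v := by
  obtain ⟨x, y⟩ := v
  apply IsGreatest.csSup_eq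
  have hd : 0 < 1 - δ := by linarith
  unfold gfun
  simp only [IsGreatest, upperBounds, Set.mem_ofPred_eq, Finset.mem_insert, Finset.mem_singleton,
    forall_eq_or_imp, forall_eq, exists_eq_or_imp, exists_eq_left, util]
  split_ifs with h1 h2 h2
  · have : y * (1 - δ) < a * (1 - δ) := mul_lt_mul_of_pos_right h1 hd
    refine ⟨Or.inr (Or.inr ⟨rfl, by linarith, by linarith, by linarith⟩), ?_⟩
    rintro b (⟨rfl, h⟩ | ⟨rfl, h⟩ | ⟨rfl, h⟩) <;> linarith
  · have : y * (1 - δ) < a * (1 - δ) := mul_lt_mul_of_pos_right h1 hd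
    refine ⟨Or.inl ⟨rfl, by linarith, by linarith, by linarith⟩, ?_⟩
    rintro b (⟨rfl, h⟩ | ⟨rfl, h⟩ | ⟨rfl, h⟩) <;> linarith
  · have : a * (1 - δ) ≤ y * (1 - δ) := mul_le_mul_of_nonneg_right (not_lt.1 h1) hd.le
    refine ⟨Or.inr (Or.inl ⟨rfl, by linarith, by linarith, by linarith⟩), ?_⟩
    rintro b (⟨rfl, h⟩ | ⟨rfl, h⟩ | ⟨rfl, h⟩) <;> linarith
  · have : a * (1 - δ) ≤ y * (1 - δ) := mul_le_mul_of_nonneg_right (not_lt.1 h1) hd.le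
    refine ⟨Or.inl ⟨rfl, by linarith, by linarith, by linarith⟩, ?_⟩
    rintro b (⟨rfl, h⟩ | ⟨rfl, h⟩ | ⟨rfl, h⟩) <;> linarith

theorem inner_int (c r : ℝ) (h0 : 0 ≤ c) (h1 : c ≤ 1) :
    ∫ x in Set.Icc (0 : ℝ) 1, (if c ≤ x then r else 0) = r * (1 - c) := by
  have : (fun x : ℝ => if c ≤ x then r else 0) = (Set.Ici c).indicator (fun _ => r) := by
    ext x; simp [Set.indicator]
  rw [this, setIntegral_indicator measurableSet_Ici]
  have h2 : Set.Icc (0 : ℝ) 1 ∩ Set.Ici c = Set.Icc c 1 := by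
    ext x; simp only [Set.mem_inter_iff, Set.mem_Icc, Set.mem_Ici]
    constructor
    · rintro ⟨⟨_, _⟩, _⟩; constructor <;> linarith
    · rintro ⟨_, _⟩; refine ⟨⟨?_, ?_⟩, ?_⟩ <;> linarith
  rw [h2, setIntegral_const, Real.volume_real_Icc_of_le h1, smul_eq_mul, mul_comm]

theorem lin_int (u w k m : ℝ) (h : u ≤ w) :
    ∫ y in Set.Icc u w, (k + m * y) = k * (w - u) + m * (w ^ 2 - u ^ 2) / 2 := by
  rw [integral_Icc_eq_integral_Ioc, ← intervalIntegral.integral_of_le h,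
    intervalIntegral.integral_add (by simp) (by apply Continuous.intervalIntegrable; fun_prop)]
  rw [intervalIntegral.integral_const_mul, integral_id, intervalIntegral.integral_const, smul_eq_mul]
  ring

theorem gfun_meas (p q δ a : ℝ) : Measurable (gfun p q δ a) := by
  unfold gfun
  refine Measurable.ite (measurableSet_lt (by fun_prop) (by fun_prop)) ?_ ?_
  · exact Measurable.ite (measurableSet_le (by fun_prop) (by fun_prop)) (by fun_prop) (by fun_prop)
  · exact Measurable.ite (measurableSet_le (by fun_prop) (by fun_prop)) (by fun_prop) (by fun_prop)

theorem rev_eq_s8 (p q δ a : ℝ) (hp1 : 1 ≤ p) (hq1 : q < 1) (hq0 : 0 ≤ q) (hqp : q < p)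
    (hδ0 : 0 ≤ δ) (hδ1 : δ < 1) (ha : a * (1 - δ) = p - q) (ha0 : 0 < a) (ha1 : a < 1)
    (hpa : p - a < 1) :
    rev {(((0 : ℝ), (0 : ℝ)), (0 : ℝ)), (((1 : ℝ), (1 : ℝ)), p), (((1 : ℝ), δ), q)}
      = q * ((1 - q) * a + δ * a ^ 2 / 2) + p * ((1 - p) * (1 - a) + (1 - a ^ 2) / 2) := by
  unfold rev
  simp_rw [price_eq p q δ a hq0 hqp hδ1 ha]
  have hset : Set.Icc ((0 : ℝ), (0 : ℝ)) ((1 : ℝ), (1 : ℝ)) = Set.Icc 0 1 ×ˢ Set.Icc 0 1 := by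
    rw [Set.Icc_prod_eq]
  rw [hset, Measure.volume_eq_prod, ← Measure.prod_restrict]
  rw [integral_prod_symm]
  · have hI : Set.Icc (0 : ℝ) 1 = Set.Ico 0 a ∪ Set.Icc a 1 :=
      (Set.Ico_union_Icc_eq_Icc ha0.le ha1.le).symm
    have e1 : Set.EqOn (fun y : ℝ => ∫ x in Set.Icc (0 : ℝ) 1, gfun p q δ a (x, y))
        (fun y => q * (1 - q) + q * δ * y) (Set.Ico 0 a) := by
      rintro y ⟨hy0, hy⟩
      simp only [gfun, hy, if_true]
      rw [inner_int _ _ (by nlinarith) (by nlinarith)]; ring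
    have e2 : Set.EqOn (fun y : ℝ => ∫ x in Set.Icc (0 : ℝ) 1, gfun p q δ a (x, y))
        (fun y => p * (1 - p) + p * y) (Set.Icc a 1) := by
      rintro y ⟨hy0, hy⟩
      simp only [gfun, not_lt.2 hy0, if_false]
      rw [inner_int _ _ (by nlinarith) (by nlinarith)]; ring
    have i1 : IntegrableOn (fun y : ℝ => q * (1 - q) + q * δ * y) (Set.Ico 0 a) :=
      (Continuous.integrableOn_Icc (by fun_prop)).mono_set Set.Ico_subset_Icc_self
    have i2 : IntegrableOn (fun y : ℝ => p * (1 - p) + p * y) (Set.Icc a 1) :=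
      Continuous.integrableOn_Icc (by fun_prop)
    have hd : Disjoint (Set.Ico 0 a) (Set.Icc a 1) := by
      rw [Set.disjoint_left]; rintro y ⟨_, h⟩ ⟨h', _⟩; linarith
    have main : ∫ y in Set.Icc (0 : ℝ) 1, (∫ x in Set.Icc (0 : ℝ) 1, gfun p q δ a (x, y))
        = (∫ y in Set.Ico 0 a, (q * (1 - q) + q * δ * y))
          + ∫ y in Set.Icc a 1, (p * (1 - p) + p * y) := by
      rw [← setIntegral_congr_fun measurableSet_Ico e1,
        ← setIntegral_congr_fun measurableSet_Icc e2]
      have hu := setIntegral_union (μ := volume) hd measurableSet_Icc (i1.congr_fun e1.symm measurableSet_Ico)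
        (i2.congr_fun e2.symm measurableSet_Icc)
      rw [← hI] at hu
      exact hu
    rw [main, ← integral_Icc_eq_integral_Ico, lin_int _ _ _ _ ha0.le, lin_int _ _ _ _ ha1.le]
    ring
  · apply Integrable.of_bound (gfun_meas p q δ a).aestronglyMeasurable p
    refine Filter.Eventually.of_forall fun v => ?_
    rw [Real.norm_eq_abs, abs_le]
    unfold gfun
    split_ifs <;> constructor <;> linarith

/-- Case 2: for `p ≥ 1 > q ≥ 0` with `q < p` and `δ ∈ [0,1)` with
`(p-q)/(1-δ) < 1` and `(q-δp)/(1-δ) < 1`, the menu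
`{((0,0),0), ((1,1),p), ((1,δ),q)}` has revenue at most `14/27`. -/
theorem case2_three_menu (p q δ : ℝ)
    (hp1 : 1 ≤ p) (hq1 : q < 1) (hq0 : 0 ≤ q) (hqp : q < p)
    (hδ0 : 0 ≤ δ) (hδ1 : δ < 1)
    (hA : (p - q) / (1 - δ) < 1)
    (hB : (q - δ * p) / (1 - δ) < 1) :
    rev {(((0 : ℝ), (0 : ℝ)), (0 : ℝ)),
         (((1 : ℝ), (1 : ℝ)), p),
         (((1 : ℝ), δ), q)} ≤ 14 / 27 := by
  have hd : 0 < 1 - δ := by linarith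
  obtain ⟨a, hadef⟩ : ∃ a, a = (p - q) / (1 - δ) := ⟨_, rfl⟩
  have ha : a * (1 - δ) = p - q := by rw [hadef]; field_simp
  have ha1 : a < 1 := by rw [hadef]; exact hA
  have ha0 : 0 < a := by rw [hadef]; exact div_pos (by linarith) hd
  have hpa : p - a < 1 := by
    have : p - a = (q - δ * p) / (1 - δ) := by
      rw [hadef]; field_simp; ring
    rw [this]; exact hB
  rw [rev_eq_s8 p q δ a hp1 hq1 hq0 hqp hδ0 hδ1 ha ha0 ha1 hpa]
  have := poly_bound a (p - q) (p - 1) ha1.le (by linarith) (by linarith) (by nlinarith)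
  have hδa : δ * a = a - (p - q) := by linarith
  have h2 : δ * a ^ 2 = (a - (p - q)) * a := by rw [← hδa]; ring
  rw [h2]
  nlinarith
end
end
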